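/- arXiv:2011.09024 — 7 statements merged into one kernel-verified Lean document; each statement's English description precedes it below -/
import Mathlib

section
/- Let d ≥ 2 be an integer for which there exists a positive integer s such that 2^d - 1 divides sd - 1, and let s = s(d) be the smallest such positive integer. Then there exist a constant c > 0 and a threshold N such that for every n ≥ N there is a d-uniform hypergraph on n vertices containing no copy of K_{2,...,2}^{(d)} with at least c · n^{d - (d - 1/s)/(2^d - 1)} edges. In other words, ex_d(n, K_{2,...,2}^{(d)}) = Ω(n^{d - (d-1/s)/(2^d-1)}). -/
/-!
The hypergraph is obtained from a random multilinear form over a finite field.  Let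
`r = ⌊(2 ^ d - 1) / d⌋ + 1`, let `q` be a prime, and let `T` be a random multilinear form on
`(F_q ^ r) ^ d`.  The `d`-partite hypergraph whose edges are the tuples `v` with `T v = 1` has about
`q ^ (r d - 1)` edges.

If all corners of a box `(a, b)` are edges, then each pair `a j, b j` is linearly independent
(`linearIndependent_of_box`), so the `2 ^ d` values of `T` at the corners are independent
(`evalHom_corner_surjective`) and the expected number of such boxes is at most
`q ^ (2 r d - 2 ^ d)`.  Moreover `T`, being affine in each coordinate, is then constantly `1` on the
product of the lines through `a j` and `b j` (`form_corner_slide`).  Hence an edge that lies in one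
box is the first corner of at least `(q - 1) ^ d` boxes (`card_bad_mul_le`), and the expected number
of edges in boxes is at most about `q ^ (2 r d - 2 ^ d - d)`.  Since `d` does not divide `2 ^ d - 1`,
the bound `(r - 1) d ≤ 2 ^ d - 2` holds, which makes this of smaller
order than the number of edges; these edges are deleted (`exists_boxFree`).

The result has order `n ^ (d - 1 / r)` edges on `n ≈ d q ^ r` vertices.  Writing
`s d - 1 = k (2 ^ d - 1)`, the required exponent is `d - k / s`, and
`s d ≤ k 2 ^ d ≤ k r d` gives `1 / r ≤ k / s` (`exponent_facts`).  Bertrand's postulate supplies a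
suitable prime for every `n`.
-/

/-- A `d`-uniform hypergraph with edge set `E` on vertex set `Fin n` contains a copy of
`K_{2,…,2}^{(d)}`: there are `2d` distinct vertices `a_1, b_1, …, a_d, b_d` such that all
`2^d` sets `{c_1, …, c_d}` with `c_j ∈ {a_j, b_j}` are edges. -/
def HasBox (d n : ℕ) (E : Finset (Finset (Fin n))) : Prop :=
  ∃ a b : Fin d → Fin n,
    Function.Injective (fun p : Fin d × Bool => if p.2 then b p.1 else a p.1) ∧
    ∀ ε : Fin d → Bool,
      (Finset.image (fun j => if ε j then b j else a j) Finset.univ) ∈ E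

/-! ### Multilinear forms and boxes -/

/-- The `d`-tuple that takes `b j` where `ε j` holds and `a j` elsewhere. -/
def corner {d : ℕ} {α : Type*} (a b : Fin d → α) (ε : Fin d → Bool) : Fin d → α :=
  fun j => if ε j then b j else a j

theorem corner_update {d : ℕ} {α : Type*} (a b : Fin d → α) (j : Fin d) (x : α)
    (ε : Fin d → Bool) :
    corner a (Function.update b j x) ε =
      if ε j then Function.update (corner a b ε) j x else corner a b ε := by
  ext i
  by_cases hi : i = j
  · subst hi
    by_cases h : ε i <;> simp [corner, h]
  · by_cases h : ε j <;> simp [corner, h, hi]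

theorem update_corner_left {d : ℕ} {α : Type*} (a b : Fin d → α) (j : Fin d) (ε : Fin d → Bool) :
    Function.update (corner a b ε) j (a j) = corner a b (Function.update ε j false) := by
  ext i
  by_cases hi : i = j
  · subst hi; simp [corner]
  · simp [corner, hi]

theorem update_corner_right {d : ℕ} {α : Type*} (a b : Fin d → α) (j : Fin d) (ε : Fin d → Bool) :
    Function.update (corner a b ε) j (b j) = corner a b (Function.update ε j true) := by
  ext i
  by_cases hi : i = j
  · subst hi; simp [corner]
  · simp [corner, hi]

/-- The multilinear form on `(F ^ r) ^ d` with coefficient tensor `c`. -/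
noncomputable def form {d r : ℕ} {F : Type*} [Field F] (c : (Fin d → Fin r) → F) :
    MultilinearMap F (fun _ : Fin d => Fin r → F) F :=
  ∑ f, c f • (MultilinearMap.mkPiAlgebra F (Fin d) F).compLinearMap
    (fun j => LinearMap.proj (f j))

section Forms

variable {d r : ℕ} {F : Type*} [Field F]

theorem form_apply (c : (Fin d → Fin r) → F) (v : Fin d → Fin r → F) :
    form c v = ∑ f, c f * ∏ j, v j (f j) := by
  simp [form]

theorem form_prod (φ v : Fin d → Fin r → F) :
    form (fun f => ∏ j, φ j (f j)) v = ∏ j, ∑ i, φ j i * v j i := by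
  rw [form_apply, Finset.prod_univ_sum, Fintype.piFinset_univ]
  simp [Finset.prod_mul_distrib]

/-- Evaluation of a form at the points `x e`, as a linear map in the coefficient tensor. -/
noncomputable def evalHom {ι : Type*} (x : ι → Fin d → Fin r → F) :
    ((Fin d → Fin r) → F) →ₗ[F] (ι → F) where
  toFun c := fun e => form c (x e)
  map_add' c c' := by ext e; simp [form_apply, add_mul, Finset.sum_add_distrib]
  map_smul' t c := by ext e; simp [form_apply, mul_assoc, Finset.mul_sum]

theorem form_corner_update {c : (Fin d → Fin r) → F} {a b : Fin d → Fin r → F}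
    (h : ∀ ε, form c (corner a b ε) = 1) (j : Fin d) (t : F) (ε : Fin d → Bool) :
    form c (corner a (Function.update b j (a j + t • (b j - a j))) ε) = 1 := by
  rw [corner_update]
  split_ifs
  · rw [MultilinearMap.map_update_add, MultilinearMap.map_update_smul,
      MultilinearMap.map_update_sub, update_corner_left, update_corner_right, h, h]
    simp
  · exact h ε

/-- A form equal to `1` at all corners of a box is multi-affine and hence constant on the product
of the lines through `a j` and `b j`, so each `b j` may slide along its line. -/
theorem form_corner_slide {c : (Fin d → Fin r) → F} {a b : Fin d → Fin r → F}
    (h : ∀ ε, form c (corner a b ε) = 1) (t : Fin d → F) (ε : Fin d → Bool) :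
    form c (corner a (fun j => a j + t j • (b j - a j)) ε) = 1 := by
  have key : ∀ S : Finset (Fin d), ∀ ε,
      form c (corner a (fun j => if j ∈ S then a j + t j • (b j - a j) else b j) ε) = 1 := by
    intro S
    induction S using Finset.induction_on with
    | empty => simpa using h
    | insert j S hj ih =>
      intro ε
      have := form_corner_update ih j (t j) ε
      convert this using 3
      ext i k
      by_cases hi : i = j
      · subst hi; simp [hj]
      · simp [hi]
  simpa using key Finset.univ ε

/-- Around a box on which a form is constantly `1`, `a j` and `b j` are linearly independent:
a relation `s • a j + t • b j = 0` evaluates to `s + t = 0`. -/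
theorem linearIndependent_of_box {c : (Fin d → Fin r) → F} {a b : Fin d → Fin r → F}
    (hab : ∀ j, a j ≠ b j) (h : ∀ ε, form c (corner a b ε) = 1) (j : Fin d) :
    LinearIndependent F ![a j, b j] := by
  rw [LinearIndependent.pair_iff]
  intro s t hst
  have h0 : form c (Function.update a j (s • a j + t • b j)) = 0 := by
    rw [hst]; exact MultilinearMap.map_update_zero _ _ _
  have ha : a = corner a b (fun _ => false) := by ext; simp [corner]
  rw [MultilinearMap.map_update_add, MultilinearMap.map_update_smul,
    MultilinearMap.map_update_smul] at h0
  have e1 : form c (Function.update a j (a j)) = 1 := by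
    conv_lhs => rw [Function.update_eq_self, ha]
    exact h _
  have e2 : form c (Function.update a j (b j)) = 1 := by
    have := update_corner_right a b j (fun _ => false)
    rw [← ha] at this
    rw [this]; exact h _
  rw [e1, e2] at h0
  have hs : s = -t := by simpa [add_eq_zero_iff_eq_neg] using h0
  have ht : t • (b j - a j) = 0 := by
    rw [hs] at hst; rw [smul_sub, sub_eq_add_neg, add_comm, ← neg_smul]; exact hst
  rcases smul_eq_zero.1 ht with ht | ht
  · simp [hs, ht]
  · exact absurd (sub_eq_zero.1 ht).symm (hab j)

theorem exists_dual {x y : Fin r → F} (h : LinearIndependent F ![x, y]) :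
    ∃ φ : Bool → Fin r → F, ∀ e e' : Bool,
      ∑ i, φ e i * (if e' then y else x) i = if e = e' then 1 else 0 := by
  obtain ⟨g, hg⟩ := LinearMap.exists_leftInverse_of_injective
    (Fintype.linearCombination F ![x, y]) (LinearMap.ker_eq_bot.2
      ((linearIndependent_iff_injective_fintypeLinearCombination).1 h))
  have hx : g x = ![1, 0] := by
    have := LinearMap.congr_fun hg ![1, 0]
    simpa [Fintype.linearCombination_apply] using this
  have hy : g y = ![0, 1] := by
    have := LinearMap.congr_fun hg ![0, 1]
    simpa [Fintype.linearCombination_apply] using this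
  refine ⟨fun e i => g (Pi.single i 1) (if e then 1 else 0), fun e e' => ?_⟩
  have hs : ∀ z : Fin r → F, ∀ k, ∑ i, g (Pi.single i 1) k * z i = g z k := by
    intro z k
    rw [LinearMap.pi_apply_eq_sum_univ g z]
    simp only [Finset.sum_apply, Pi.smul_apply, smul_eq_mul]
    refine Finset.sum_congr rfl fun i _ => ?_
    rw [mul_comm]
    have hi : (Pi.single i 1 : Fin r → F) = fun j => if i = j then 1 else 0 := by
      ext l; simp [Pi.single_apply, eq_comm]
    rw [hi]
  rw [hs]
  cases e <;> cases e' <;> simp [hx, hy]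

/-- The `2 ^ d` evaluations at the corners of a nondegenerate box are independent: a product of
dual vectors is a form equal to `1` at a prescribed corner and `0` at the others. -/
theorem evalHom_corner_surjective {a b : Fin d → Fin r → F}
    (h : ∀ j, LinearIndependent F ![a j, b j]) :
    Function.Surjective (evalHom (corner a b)) := by
  choose φ hφ using fun j => exists_dual (h j)
  intro y
  refine ⟨∑ ε, y ε • fun f => ∏ j, φ j (ε j) (f j), ?_⟩
  rw [map_sum]
  ext ε'
  have : ∀ ε, evalHom (corner a b) (fun f => ∏ j, φ j (ε j) (f j)) ε' =
      if ε = ε' then 1 else 0 := by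
    intro ε
    change form _ _ = _
    rw [form_prod (fun j => φ j (ε j))]
    have : ∀ j, ∑ i, φ j (ε j) i * corner a b ε' j i = if ε j = ε' j then 1 else 0 :=
      fun j => hφ j (ε j) (ε' j)
    simp only [this, Finset.prod_ite_zero, funext_iff]
    simp
  simp only [Finset.sum_apply, map_smul, Pi.smul_apply, this]
  simp

theorem evalHom_point_surjective {v : Fin d → Fin r → F} (h : ∀ j, v j ≠ 0) :
    Function.Surjective (evalHom (fun _ : Unit => v)) := by
  have hφ : ∀ j, ∃ φ : Fin r → F, ∑ i, φ i * v j i = 1 := by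
    intro j
    obtain ⟨i, hi⟩ := Function.ne_iff.1 (h j)
    refine ⟨Pi.single i (v j i)⁻¹, ?_⟩
    rw [Finset.sum_eq_single i]
    · simpa using inv_mul_cancel₀ hi
    · intro k _ hk; simp [hk]
    · simp
  choose φ hφ using hφ
  intro y
  refine ⟨y () • fun f => ∏ j, φ j (f j), ?_⟩
  ext
  rw [map_smul, Pi.smul_apply]
  change _ • form _ _ = _
  rw [form_prod]
  simp [hφ]

theorem card_fiber {A B : Type*} [AddCommGroup A] [AddCommGroup B] [Fintype A] [Fintype B]
    [DecidableEq B] (g : A →+ B) (hg : Function.Surjective g) (y : B) :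
    (Finset.univ.filter fun x => g x = y).card * Fintype.card B = Fintype.card A := by
  have h := Finset.card_eq_sum_card_fiberwise (s := (Finset.univ : Finset A))
    (t := (Finset.univ : Finset B)) (f := g) (fun _ _ => by simp)
  have h2 : ∀ z : B, (Finset.univ.filter fun x => g x = z).card =
      (Finset.univ.filter fun x => g x = y).card := fun z =>
    AddMonoidHom.card_fiber_eq_of_mem_range g (hg z) (hg y)
  rw [Finset.card_univ] at h
  rw [h, Finset.sum_congr rfl fun z _ => h2 z]
  simp [mul_comm]

end Forms

/-! ### Counting edges and boxes -/

section Counting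

variable {d r : ℕ} {F : Type*} [Field F] [Fintype F] [DecidableEq F]

open Finset

/-- The tuples at which the form with coefficients `c` takes the value `1`. -/
noncomputable def edges (c : (Fin d → Fin r) → F) : Finset (Fin d → Fin r → F) :=
  univ.filter fun v => form c v = 1

/-- The ordered boxes all of whose corners are in `edges c`. -/
noncomputable def boxes (c : (Fin d → Fin r) → F) :
    Finset ((Fin d → Fin r → F) × (Fin d → Fin r → F)) :=
  univ.filter fun p => (∀ j, p.1 j ≠ p.2 j) ∧ ∀ ε, form c (corner p.1 p.2 ε) = 1

/-- The tuples that are the first corner of some box. -/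
noncomputable def bad (c : (Fin d → Fin r) → F) : Finset (Fin d → Fin r → F) :=
  (boxes c).image Prod.fst

/-- Sliding the second corner along the lines through the first one turns one box at a bad tuple
into `(q - 1) ^ d` of them. -/
theorem card_bad_mul_le (c : (Fin d → Fin r) → F) :
    (bad c).card * (Fintype.card F - 1) ^ d ≤ (boxes c).card := by
  have hw : ∀ v ∈ bad c, ∃ b, (v, b) ∈ boxes c := by
    intro v hv
    obtain ⟨⟨a, b⟩, h, rfl⟩ := mem_image.1 hv
    exact ⟨b, h⟩
  choose! b hb using hw
  have hcard : (univ : Finset (Fin d → Fˣ)).card = (Fintype.card F - 1) ^ d := by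
    simp [Fintype.card_units]
  rw [← hcard, ← card_product]
  refine card_le_card_of_injOn
    (fun p => (p.1, fun j => p.1 j + (p.2 j : F) • (b p.1 j - p.1 j))) ?_ ?_
  · rintro ⟨v, t⟩ hp
    have hv : v ∈ bad c := (mem_product.1 hp).1
    have := hb v hv
    simp only [boxes, mem_filter, mem_univ, true_and] at this
    simp only [boxes, coe_filter, mem_univ, true_and, Set.mem_ofPred_eq]
    refine ⟨fun j h => ?_, form_corner_slide this.2 fun j => (t j : F)⟩
    have h' : (t j : F) • (b v j - v j) = 0 := by simpa using h
    rcases smul_eq_zero.1 h' with h' | h'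
    · exact (t j).ne_zero h'
    · exact this.1 j (sub_eq_zero.1 h').symm
  · rintro ⟨v, t⟩ hp ⟨w, u⟩ _ h
    have hv : v ∈ bad c := (mem_product.1 hp).1
    have hne := hb v hv
    simp only [boxes, mem_filter, mem_univ, true_and] at hne
    obtain ⟨rfl, h2⟩ := Prod.mk.inj h
    refine Prod.ext rfl (funext fun j => Units.ext ?_)
    have h3 := congrFun h2 j
    have h4 : (t j : F) • (b v j - v j) = (u j : F) • (b v j - v j) := by simpa using h3
    exact smul_left_injective F (sub_ne_zero.2 (hne.1 j).symm) h4

theorem sum_card_edges :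
    (Fintype.card F ^ r - 1) ^ d * Fintype.card ((Fin d → Fin r) → F) ≤
      (∑ c : (Fin d → Fin r) → F, (edges c).card) * Fintype.card F := by
  have hsum : ∑ c : (Fin d → Fin r) → F, (edges c).card =
      ∑ v : Fin d → Fin r → F, (univ.filter fun c => form c v = 1).card := by
    simp only [edges, card_filter]
    exact sum_comm
  have hpt : ∀ v ∈ Fintype.piFinset (fun _ : Fin d => ({0}ᶜ : Finset (Fin r → F))),
      (univ.filter fun c => form c v = 1).card * Fintype.card F =
        Fintype.card ((Fin d → Fin r) → F) := by
    intro v hv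
    have hv' : ∀ j, v j ≠ 0 := by simpa [Fintype.mem_piFinset] using hv
    have h := card_fiber (evalHom (fun _ : Unit => v)).toAddMonoidHom
      (evalHom_point_surjective hv') (fun _ => 1)
    rw [← h]
    congr 1
    · congr 1
      ext c
      simp [evalHom, funext_iff]
    · simp
  calc (Fintype.card F ^ r - 1) ^ d * Fintype.card ((Fin d → Fin r) → F)
      = ∑ v ∈ Fintype.piFinset (fun _ : Fin d => ({0}ᶜ : Finset (Fin r → F))),
        (univ.filter fun c => form c v = 1).card * Fintype.card F := by
        rw [sum_congr rfl hpt, sum_const, Fintype.card_piFinset]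
        simp [card_compl]
    _ ≤ _ := by
        rw [hsum, sum_mul]
        exact sum_le_sum_of_subset (subset_univ _)

theorem sum_card_boxes :
    (∑ c : (Fin d → Fin r) → F, (boxes c).card) * Fintype.card F ^ 2 ^ d ≤
      Fintype.card F ^ (2 * (r * d)) * Fintype.card ((Fin d → Fin r) → F) := by
  have hsum : ∑ c : (Fin d → Fin r) → F, (boxes c).card =
      ∑ p : (Fin d → Fin r → F) × (Fin d → Fin r → F), (univ.filter fun c =>
        (∀ j, p.1 j ≠ p.2 j) ∧ ∀ ε, form c (corner p.1 p.2 ε) = 1).card := by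
    simp only [boxes, card_filter]
    exact sum_comm
  have hpt : ∀ p : (Fin d → Fin r → F) × (Fin d → Fin r → F), (univ.filter fun c =>
        (∀ j, p.1 j ≠ p.2 j) ∧ ∀ ε, form c (corner p.1 p.2 ε) = 1).card *
        Fintype.card F ^ 2 ^ d ≤ Fintype.card ((Fin d → Fin r) → F) := by
    rintro ⟨a, b⟩
    by_cases hli : ∀ j, LinearIndependent F ![a j, b j]
    · have h := card_fiber (evalHom (corner a b)).toAddMonoidHom
        (evalHom_corner_surjective hli) (fun _ => 1)
      rw [← h]
      refine Nat.mul_le_mul (card_le_card ?_) (by simp)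
      intro c hc
      simp only [mem_filter, mem_univ, true_and] at hc ⊢
      exact funext hc.2
    · have : (univ.filter fun c : (Fin d → Fin r) → F =>
          (∀ j, a j ≠ b j) ∧ ∀ ε, form c (corner a b ε) = 1) = ∅ := by
        refine filter_eq_empty_iff.2 fun c _ h => hli (linearIndependent_of_box h.1 h.2)
      simp [this]
  rw [hsum, sum_mul]
  refine (sum_le_sum fun p _ => hpt p).trans (le_of_eq ?_)
  rw [sum_const, smul_eq_mul, card_univ, Fintype.card_prod]
  simp only [Fintype.card_pi, prod_const, card_univ, Fintype.card_fin]
  ring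

/-- First-moment deletion: for an average form, removing the bad tuples leaves a box-free set of
the stated size. -/
theorem exists_boxFree :
    ∃ G : Finset (Fin d → Fin r → F),
      (∀ a b : Fin d → Fin r → F, (∀ j, a j ≠ b j) → ∃ ε, corner a b ε ∉ G) ∧
      (Fintype.card F - 1) ^ d * Fintype.card F ^ (2 ^ d - 1) * (Fintype.card F ^ r - 1) ^ d ≤
        (Fintype.card F - 1) ^ d * Fintype.card F ^ 2 ^ d * G.card +
          Fintype.card F ^ (2 * (r * d)) := by
  set q := Fintype.card F with hq
  set M := Fintype.card ((Fin d → Fin r) → F) with hM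
  have hbf : ∀ c : (Fin d → Fin r) → F, ∀ a b : Fin d → Fin r → F, (∀ j, a j ≠ b j) →
      ∃ ε, corner a b ε ∉ edges c \ bad c := by
    intro c a b hab
    by_contra! h
    have hbox : (a, b) ∈ boxes c := by
      simp only [boxes, mem_filter, mem_univ, true_and]
      exact ⟨hab, fun ε => (mem_filter.1 (mem_sdiff.1 (h ε)).1).2⟩
    have ha : corner a b (fun _ => false) = a := by ext; simp [corner]
    exact (mem_sdiff.1 (h fun _ => false)).2 (ha ▸ mem_image_of_mem Prod.fst hbox)
  by_contra! hcon
  have hlt : ∀ c : (Fin d → Fin r) → F,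
      (q - 1) ^ d * q ^ 2 ^ d * (edges c).card + q ^ (2 * (r * d)) <
        (q - 1) ^ d * q ^ (2 ^ d - 1) * (q ^ r - 1) ^ d + q ^ 2 ^ d * (boxes c).card := by
    intro c
    have h1 := hcon (edges c \ bad c) (hbf c)
    have h2 : (edges c).card ≤ (edges c \ bad c).card + (bad c).card :=
      tsub_le_iff_right.1 (le_card_sdiff (bad c) (edges c))
    have h3 := card_bad_mul_le c
    rw [← hq] at h3
    calc _ ≤ (q - 1) ^ d * q ^ 2 ^ d * ((edges c \ bad c).card + (bad c).card) +
          q ^ (2 * (r * d)) := by gcongr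
      _ = ((q - 1) ^ d * q ^ 2 ^ d * (edges c \ bad c).card + q ^ (2 * (r * d))) +
          q ^ 2 ^ d * ((bad c).card * (q - 1) ^ d) := by ring
      _ < _ := add_lt_add_of_lt_of_le h1 (by gcongr)
  have hsum := sum_lt_sum_of_nonempty (s := (univ : Finset ((Fin d → Fin r) → F)))
    univ_nonempty fun c _ => hlt c
  simp only [sum_add_distrib, ← mul_sum, sum_const, card_univ, smul_eq_mul] at hsum
  rw [← hM] at hsum
  have he := sum_card_edges (d := d) (r := r) (F := F)
  have hb := sum_card_boxes (d := d) (r := r) (F := F)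
  rw [← hq, ← hM] at he hb
  have hpow : q ^ 2 ^ d = q ^ (2 ^ d - 1) * q := by
    rw [← pow_succ, Nat.sub_add_cancel Nat.one_le_two_pow]
  have he' := Nat.mul_le_mul_left ((q - 1) ^ d * q ^ (2 ^ d - 1)) he
  have e1 : (q - 1) ^ d * q ^ 2 ^ d * ∑ c : (Fin d → Fin r) → F, (edges c).card =
      (q - 1) ^ d * q ^ (2 ^ d - 1) *
        ((∑ c : (Fin d → Fin r) → F, (edges c).card) * q) := by
    rw [hpow]; ring
  rw [e1] at hsum
  linarith

end Counting

/-! ### From tuples to hypergraphs -/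

/-- A box-free set of `d`-tuples over `α` becomes a box-free `d`-partite hypergraph, with one part
`{j} × α` for each coordinate. -/
theorem exists_hypergraph {d n : ℕ} {α : Type*} [Fintype α] [DecidableEq α]
    (hn : d * Fintype.card α ≤ n) (G : Finset (Fin d → α))
    (hG : ∀ a b : Fin d → α, (∀ j, a j ≠ b j) → ∃ ε, corner a b ε ∉ G) :
    ∃ E : Finset (Finset (Fin n)),
      (∀ e ∈ E, e.card = d) ∧ ¬ HasBox d n E ∧ E.card = G.card := by
  classical
  obtain ⟨φ⟩ : Nonempty (Fin d × α ↪ Fin n) :=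
    Function.Embedding.nonempty_of_card_le (by simpa using hn)
  let edge : (Fin d → α) → Finset (Fin n) := fun v => Finset.univ.image fun j => φ (j, v j)
  have mem_edge : ∀ v x, φ x ∈ edge v ↔ v x.1 = x.2 := by
    rintro v ⟨i, y⟩
    simp only [edge, Finset.mem_image, Finset.mem_univ, true_and, EmbeddingLike.apply_eq_iff_eq,
      Prod.mk.injEq]
    constructor
    · rintro ⟨j, rfl, h⟩; exact h
    · intro h; exact ⟨i, rfl, h⟩
  have edge_inj : Function.Injective edge := by
    intro v w h
    ext j
    have := (mem_edge v (j, v j)).2 rfl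
    rw [h, mem_edge] at this
    exact this.symm
  refine ⟨G.image edge, ?_, ?_, Finset.card_image_of_injective _ edge_inj⟩
  · intro e he
    obtain ⟨v, -, rfl⟩ := Finset.mem_image.1 he
    rw [Finset.card_image_of_injective _ (fun i j h => by
      simpa using congrArg Prod.fst (φ.injective h))]
    simp
  · rintro ⟨a, b, hinj, hbox⟩
    choose v hvG hv using fun ε => Finset.mem_image.1 (hbox ε)
    have hmem : ∀ ε j, (if ε j then b j else a j) ∈ edge (v ε) := by
      intro ε j
      rw [hv]
      exact Finset.mem_image_of_mem _ (Finset.mem_univ j)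
    have hrange : ∀ w x, x ∈ edge w → ∃ z, φ z = x := by
      intro w x hx
      obtain ⟨j, -, hj⟩ := Finset.mem_image.1 hx
      exact ⟨_, hj⟩
    choose A hA using fun j => hrange _ (a j) (by simpa using hmem (fun _ => false) j)
    choose B hB using fun j => hrange _ (b j) (by simpa using hmem (fun _ => true) j)
    have hφ : ∀ (ε : Fin d → Bool) (j), (if ε j then b j else a j) = φ (if ε j then B j else A j) := by
      intro ε j; split_ifs <;> simp [hA, hB]
    have hvE : ∀ ε j, v ε (if ε j then B j else A j).1 = (if ε j then B j else A j).2 := by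
      intro ε j
      rw [← mem_edge, ← hφ]; exact hmem ε j
    -- each edge meets each part once, so its vertices lie in distinct parts
    have hpart : ∀ ε : Fin d → Bool, Function.Injective fun j => (if ε j then B j else A j).1 := by
      intro ε i j hij
      have h1 : (if ε i then B i else A i) = (if ε j then B j else A j) := by
        refine Prod.ext hij ?_
        rw [← hvE, ← hvE]; exact congrArg _ hij
      have h2 : (if ε i then b i else a i) = (if ε j then b j else a j) := by
        rw [hφ, hφ, h1]
      exact congrArg Prod.fst (@hinj (i, ε i) (j, ε j) h2)
    have hσ : Function.Bijective fun j => (A j).1 := by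
      refine Finite.injective_iff_bijective.1 ?_
      simpa using hpart fun _ => false
    have hBA : ∀ j, (B j).1 = (A j).1 := by
      intro j
      obtain ⟨i, hi⟩ := hσ.2 (B j).1
      by_cases hij : i = j
      · subst hij; exact hi.symm
      · refine absurd (@hpart (Function.update (fun _ => false) j true) i j ?_) hij
        simpa [hij] using hi
    let σ : Fin d ≃ Fin d := Equiv.ofBijective _ hσ
    have hσA : ∀ j, (A j).1 = σ j := fun j => rfl
    obtain ⟨ε, hε⟩ := hG (fun i => (A (σ.symm i)).2) (fun i => (B (σ.symm i)).2) (by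
      intro i h
      have h1 : A (σ.symm i) = B (σ.symm i) := Prod.ext (hBA _).symm h
      have h2 : a (σ.symm i) = b (σ.symm i) := by rw [← hA, ← hB, h1]
      have := @hinj (σ.symm i, false) (σ.symm i, true) (by simpa using h2)
      simp at this)
    apply hε
    convert hvG (fun j => ε (σ j))
    ext i
    have := hvE (fun j => ε (σ j)) (σ.symm i)
    simp only [Equiv.apply_symm_apply] at this
    simp only [corner]
    split_ifs with h <;> simp only [h, if_true] at this
    · rw [← this, hBA, hσA]; simp
    · simp only [Bool.false_eq_true, if_false] at this
      rw [← this, hσA]; simp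

/-! ### Choice of parameters -/

/-- Bertrand's postulate, applied to the largest `m` with `d * (2 * m) ^ r ≤ n`. -/
theorem exists_prime_pow_le {d r m₀ n : ℕ} (hd : 0 < d) (hr : 0 < r) (hm₀ : 0 < m₀)
    (hn : d * (2 * m₀) ^ r ≤ n) :
    ∃ p : ℕ, p.Prime ∧ m₀ ≤ p ∧ d * p ^ r ≤ n ∧ n ≤ d * 4 ^ r * p ^ r := by
  set m := Nat.findGreatest (fun m => d * (2 * m) ^ r ≤ n) n with hm
  have hle : ∀ k, d * (2 * k) ^ r ≤ n → k ≤ n := by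
    intro k hk
    calc k ≤ 2 * k := by omega
      _ ≤ (2 * k) ^ r := Nat.le_self_pow hr.ne' _
      _ ≤ d * (2 * k) ^ r := Nat.le_mul_of_pos_left _ hd
      _ ≤ n := hk
  have h1 : d * (2 * m) ^ r ≤ n :=
    Nat.findGreatest_spec (P := fun m => d * (2 * m) ^ r ≤ n) (hle _ hn) hn
  have h2 : m₀ ≤ m := Nat.le_findGreatest (hle _ hn) hn
  have h3 : n < d * (2 * (m + 1)) ^ r := by
    by_contra! h
    have := Nat.le_findGreatest (P := fun m => d * (2 * m) ^ r ≤ n) (hle _ h) h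
    omega
  obtain ⟨p, hp, hmp, hpm⟩ := Nat.exists_prime_lt_and_le_two_mul m (by omega)
  refine ⟨p, hp, by omega, le_trans (by gcongr) h1, h3.le.trans ?_⟩
  rw [mul_assoc, ← mul_pow]
  gcongr <;> omega

/-- Solves the inequality of `exists_boxFree` for the size `g` of the box-free set. -/
theorem boxFree_size {d r q g : ℕ} (hr : 0 < r) (hrd : r * d + 2 ≤ 2 ^ d + d)
    (hq : 2 * 4 ^ d ≤ q)
    (h : (q - 1) ^ d * q ^ (2 ^ d - 1) * (q ^ r - 1) ^ d ≤
      (q - 1) ^ d * q ^ 2 ^ d * g + q ^ (2 * (r * d))) :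
    q ^ (r * d) ≤ 2 ^ (d + 1) * (q * g) := by
  have h4 : 1 ≤ 4 ^ d := Nat.one_le_pow _ _ (by norm_num)
  have hq2 : 2 ≤ q := by omega
  have hqr : q ≤ q ^ r := Nat.le_self_pow hr.ne' _
  have a1 : q ≤ 2 * (q - 1) := by omega
  have a2 : q ^ r ≤ 2 * (q ^ r - 1) := by omega
  have b1 : q ^ d ≤ 2 ^ d * (q - 1) ^ d := by rw [← mul_pow]; gcongr
  have b2 : q ^ (r * d) ≤ 2 ^ d * (q ^ r - 1) ^ d := by rw [← mul_pow, pow_mul]; gcongr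
  have hpow : q ^ 2 ^ d = q ^ (2 ^ d - 1) * q := by
    rw [← pow_succ, Nat.sub_add_cancel Nat.one_le_two_pow]
  -- the error term is at most half of the main term
  have key : 2 * q ^ (2 * (r * d)) ≤ (q - 1) ^ d * q ^ (2 ^ d - 1) * (q ^ r - 1) ^ d := by
    have h4pos : 0 < 4 ^ d := h4
    refine Nat.le_of_mul_le_mul_left ?_ h4pos
    calc 4 ^ d * (2 * q ^ (2 * (r * d))) = 2 * 4 ^ d * q ^ (2 * (r * d)) := by ring
      _ ≤ q * q ^ (2 * (r * d)) := by gcongr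
      _ = q ^ (2 * (r * d) + 1) := by ring
      _ ≤ q ^ (d + (2 ^ d - 1) + r * d) := by
        refine Nat.pow_le_pow_right (by omega) ?_
        have := Nat.one_le_two_pow (n := d)
        omega
      _ = q ^ d * q ^ (2 ^ d - 1) * q ^ (r * d) := by rw [pow_add, pow_add]
      _ ≤ (2 ^ d * (q - 1) ^ d) * q ^ (2 ^ d - 1) * (2 ^ d * (q ^ r - 1) ^ d) := by gcongr
      _ = 4 ^ d * ((q - 1) ^ d * q ^ (2 ^ d - 1) * (q ^ r - 1) ^ d) := by
        rw [show (4 : ℕ) = 2 * 2 from rfl, mul_pow]; ring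
  have hmain : (q - 1) ^ d * q ^ (2 ^ d - 1) * (q ^ r - 1) ^ d ≤
      (q - 1) ^ d * q ^ (2 ^ d - 1) * (2 * (q * g)) := by
    have : (q - 1) ^ d * q ^ (2 ^ d - 1) * (2 * (q * g)) =
        2 * ((q - 1) ^ d * q ^ 2 ^ d * g) := by rw [hpow]; ring
    rw [this]; omega
  have hpos : 0 < (q - 1) ^ d * q ^ (2 ^ d - 1) :=
    Nat.mul_pos (Nat.pow_pos (by omega)) (Nat.pow_pos (by omega))
  have hfin := Nat.le_of_mul_le_mul_left hmain hpos
  calc q ^ (r * d) ≤ 2 ^ d * (q ^ r - 1) ^ d := b2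
    _ ≤ 2 ^ d * (2 * (q * g)) := by gcongr
    _ = _ := by ring

/-- The witness is `r = ⌊(2 ^ d - 1) / d⌋ + 1`.  A common divisor of `d` and `2 ^ d - 1` divides
`1`, so `d ∤ 2 ^ d - 1`; this gives both `r * d + 2 ≤ 2 ^ d + d` and `2 ^ d ≤ r * d`. -/
theorem exponent_facts {d s : ℕ} (hd : 2 ≤ d) (hs : 0 < s)
    (hdvd : (2 ^ d - 1) ∣ (s * d - 1)) :
    ∃ r : ℕ, 0 < r ∧ r * d + 2 ≤ 2 ^ d + d ∧
      (d : ℝ) - ((d : ℝ) - 1 / (s : ℝ)) / ((2 : ℝ) ^ d - 1) ≤ (d : ℝ) - 1 / (r : ℝ) := by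
  obtain ⟨k, hk⟩ := hdvd
  have h4 : 4 ≤ 2 ^ d := by
    calc 4 = 2 ^ 2 := rfl
      _ ≤ 2 ^ d := Nat.pow_le_pow_right (by norm_num) hd
  have hsd : 2 ≤ s * d := by nlinarith
  have hk' : s * d = (2 ^ d - 1) * k + 1 := by omega
  have hkpos : 0 < k := by
    rcases Nat.eq_zero_or_pos k with h | h
    · subst h; omega
    · exact h
  have hmod : 0 < (2 ^ d - 1) % d := by
    rcases Nat.eq_zero_or_pos ((2 ^ d - 1) % d) with h | h
    · have h1 : d ∣ (2 ^ d - 1) * k := (Nat.dvd_of_mod_eq_zero h).mul_right k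
      have h2 : d ∣ (2 ^ d - 1) * k + 1 := hk' ▸ dvd_mul_left d s
      have h3 : d ∣ 1 := (Nat.dvd_add_right h1).1 h2
      have := Nat.le_of_dvd one_pos h3
      omega
    · exact h
  have hdiv := Nat.div_add_mod (2 ^ d - 1) d
  have hlt := Nat.mod_lt (2 ^ d - 1) (show 0 < d by omega)
  set t := (2 ^ d - 1) / d with ht
  have htd : (t + 1) * d = d * t + d := by ring
  have hrlow : 2 ^ d ≤ (t + 1) * d := by omega
  refine ⟨t + 1, Nat.succ_pos t, by omega, ?_⟩
  have hskr : s ≤ k * (t + 1) := by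
    refine Nat.le_of_mul_le_mul_right (c := d) ?_ (by omega)
    calc s * d = (2 ^ d - 1) * k + 1 := hk'
      _ ≤ (2 ^ d - 1) * k + k := by omega
      _ = (2 ^ d - 1 + 1) * k := by ring
      _ = 2 ^ d * k := by rw [Nat.sub_add_cancel (by omega)]
      _ ≤ (t + 1) * d * k := by gcongr
      _ = k * (t + 1) * d := by ring
  have hkR : (s : ℝ) * d = ((2 : ℝ) ^ d - 1) * k + 1 := by
    have := congrArg (Nat.cast (R := ℝ)) hk'
    push_cast [Nat.cast_sub (show 1 ≤ 2 ^ d by omega)] at this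
    exact this
  have hP : (0 : ℝ) < (2 : ℝ) ^ d - 1 := by
    have : (4 : ℝ) ≤ (2 : ℝ) ^ d := by exact_mod_cast h4
    linarith
  have hsR : (0 : ℝ) < s := by exact_mod_cast hs
  have heq : ((d : ℝ) - 1 / (s : ℝ)) / ((2 : ℝ) ^ d - 1) = k / s := by
    field_simp
    linarith
  rw [heq]
  have : (1 : ℝ) / ((t + 1 : ℕ) : ℝ) ≤ k / s := by
    rw [div_le_div_iff₀ (by positivity) hsR, one_mul]
    exact_mod_cast hskr
  linarith

theorem GRS_lower_bound (d s : ℕ) (hd : 2 ≤ d) (hs : 0 < s)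
    (hdvd : (2 ^ d - 1) ∣ (s * d - 1))
    (hmin : ∀ s' : ℕ, 0 < s' → (2 ^ d - 1) ∣ (s' * d - 1) → s ≤ s') :
    ∃ c : ℝ, 0 < c ∧ ∃ N : ℕ, ∀ n : ℕ, N ≤ n →
      ∃ E : Finset (Finset (Fin n)),
        (∀ e ∈ E, e.card = d) ∧ ¬ HasBox d n E ∧
        c * (n : ℝ) ^ ((d : ℝ) - ((d : ℝ) - 1 / (s : ℝ)) / ((2 : ℝ) ^ d - 1)) ≤ (E.card : ℝ) := by
  obtain ⟨r, hr, hrd, hexp⟩ := exponent_facts hd hs hdvd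
  set C : ℝ := ((d * 4 ^ r : ℕ) : ℝ) ^ ((d : ℝ) - 1 / (r : ℝ)) * 2 ^ (d + 1) with hC
  have hdr : 0 < d * 4 ^ r := Nat.mul_pos (by omega) (by positivity)
  have hCpos : 0 < C := by
    have : (0 : ℝ) < ((d * 4 ^ r : ℕ) : ℝ) := by exact_mod_cast hdr
    positivity
  refine ⟨C⁻¹, inv_pos.2 hCpos, d * (2 * (2 * 4 ^ d)) ^ r, fun n hn => ?_⟩
  obtain ⟨p, hp, hpm, hpn, hnp⟩ := exists_prime_pow_le (by omega) hr (by positivity) hn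
  have : Fact p.Prime := ⟨hp⟩
  obtain ⟨G, hG, hGc⟩ := exists_boxFree (d := d) (r := r) (F := ZMod p)
  rw [ZMod.card] at hGc
  have hsize := boxFree_size hr hrd hpm hGc
  obtain ⟨E, hE1, hE2, hE3⟩ := exists_hypergraph (n := n) (by simpa using hpn) G hG
  refine ⟨E, hE1, hE2, ?_⟩
  rw [hE3, inv_mul_le_iff₀ hCpos]
  have hppos : (0 : ℝ) < p := by exact_mod_cast hp.pos
  have hrR : (0 : ℝ) < r := by exact_mod_cast hr
  have hn1 : (1 : ℝ) ≤ n := by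
    have : 0 < d * p ^ r := Nat.mul_pos (by omega) (Nat.pow_pos hp.pos)
    exact_mod_cast this.trans_le hpn
  have he0 : (0 : ℝ) ≤ (d : ℝ) - 1 / (r : ℝ) := by
    have h1 : (1 : ℝ) / r ≤ 1 := by
      rw [div_le_one hrR]; exact_mod_cast hr
    have h2 : (2 : ℝ) ≤ d := by exact_mod_cast hd
    linarith
  have hpe : ((p : ℝ) ^ r) ^ ((d : ℝ) - 1 / (r : ℝ)) * p = (p : ℝ) ^ (r * d) := by
    rw [← Real.rpow_natCast (p : ℝ) r, ← Real.rpow_mul hppos.le]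
    nth_rewrite 2 [← Real.rpow_one (p : ℝ)]
    rw [← Real.rpow_add hppos, ← Real.rpow_natCast]
    congr 1
    push_cast
    field_simp
    ring
  have hsizeR : (p : ℝ) ^ (r * d) ≤ 2 ^ (d + 1) * (p * G.card) := by exact_mod_cast hsize
  have hpG : ((p : ℝ) ^ r) ^ ((d : ℝ) - 1 / (r : ℝ)) ≤ 2 ^ (d + 1) * G.card := by
    refine le_of_mul_le_mul_right ?_ hppos
    rw [hpe]; linarith
  calc (n : ℝ) ^ ((d : ℝ) - ((d : ℝ) - 1 / (s : ℝ)) / ((2 : ℝ) ^ d - 1))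
      ≤ (n : ℝ) ^ ((d : ℝ) - 1 / (r : ℝ)) := Real.rpow_le_rpow_of_exponent_le hn1 hexp
    _ ≤ (((d * 4 ^ r : ℕ) : ℝ) * (p : ℝ) ^ r) ^ ((d : ℝ) - 1 / (r : ℝ)) := by
      refine Real.rpow_le_rpow (by positivity) ?_ he0
      exact_mod_cast hnp
    _ = ((d * 4 ^ r : ℕ) : ℝ) ^ ((d : ℝ) - 1 / (r : ℝ)) *
        ((p : ℝ) ^ r) ^ ((d : ℝ) - 1 / (r : ℝ)) :=
      Real.mul_rpow (by positivity) (by positivity)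
    _ ≤ ((d * 4 ^ r : ℕ) : ℝ) ^ ((d : ℝ) - 1 / (r : ℝ)) * (2 ^ (d + 1) * G.card) := by gcongr
    _ = C * G.card := by rw [hC]; ring
end

section
/- For any integer d ≥ 2, there exists a constant C > 0 such that for every positive integer n, every d-uniform hypergraph on n vertices containing no copy of K_{2,...,2}^{(d)} has at most C · n^{d - 1/2^{d-1}} edges. In other words, ex_d(n, K_{2,...,2}^{(d)}) = O(n^{d - 1/2^{d-1}}). -/
open Finset

/-- The vertex tuple that takes its `j`-th entry from `b` if `ε j` is true and from `a` otherwise. -/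
def boxChoice {k : ℕ} {V : Type} (a b : Fin k → V) (ε : Fin k → Bool) : Fin k → V :=
  fun j => if ε j then b j else a j

lemma boxChoice_cons {k : ℕ} {V : Type} (a b : Fin k → V) (u v : V) (t : Bool)
    (ε : Fin k → Bool) :
    boxChoice (Fin.cons u a : Fin (k + 1) → V) (Fin.cons v b) (Fin.cons t ε) =
      Fin.cons (if t then v else u) (boxChoice a b ε) := by
  funext j
  refine Fin.cases ?_ (fun i => ?_) j <;> simp [boxChoice]

lemma sum_tuple_cons {k : ℕ} {V : Type} [Fintype V] (F : (Fin (k + 1) → V) → ℕ) :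
    ∑ x, F x = ∑ v, ∑ y : Fin k → V, F (Fin.cons v y) := by
  rw [← Fintype.sum_prod_type']
  exact (Fintype.sum_equiv (Fin.consEquiv (fun _ => V)) _ _ (fun p => rfl)).symm

lemma prod_cons_bool {k : ℕ} (F : (Fin (k + 1) → Bool) → ℕ) :
    ∏ ε, F ε = ∏ ε : Fin k → Bool, F (Fin.cons true ε) * F (Fin.cons false ε) := by
  rw [prod_mul_distrib, ← Fintype.prod_bool (fun t => ∏ ε : Fin k → Bool, F (Fin.cons t ε)),
    ← Fintype.prod_prod_type']
  exact (Fintype.prod_equiv (Fin.consEquiv (fun _ => Bool)) _ _ (fun p => rfl)).symm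

/-- Iterated Cauchy–Schwarz in the coordinates of `Fin k → V`. The parameter space `W` is arbitrary
because the induction moves the pair of values of the doubled coordinate into it. -/
lemma box_cauchy_schwarz {V : Type} [Fintype V] (k : ℕ) :
    ∀ {W : Type} [Fintype W] (f : (Fin k → V) → W → ℕ),
      Fintype.card V ^ (2 * k) * Fintype.card W * (∑ x, ∑ w, f x w) ^ 2 ^ k ≤
        (Fintype.card V ^ k * Fintype.card W) ^ 2 ^ k *
          ∑ a : Fin k → V, ∑ b : Fin k → V, ∑ w, ∏ ε, f (boxChoice a b ε) w := by
  induction k with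
  | zero =>
    intro W _ f
    have h : ∀ (a b : Fin 0 → V) ε, boxChoice a b ε = default := fun a b ε => Subsingleton.elim _ _
    simp [h]
  | succ k ih =>
    intro W _ f
    set n := Fintype.card V
    set m := Fintype.card W
    set S := ∑ x, ∑ w, f x w
    let g : (Fin k → V) → (W × V × V) → ℕ :=
      fun y p => f (Fin.cons p.2.1 y) p.1 * f (Fin.cons p.2.2 y) p.1
    set S' := ∑ y, ∑ p, g y p with hS'
    set T := ∑ a : Fin (k + 1) → V, ∑ b : Fin (k + 1) → V, ∑ w, ∏ ε, f (boxChoice a b ε) w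
    have hS : S = ∑ q : (Fin k → V) × W, ∑ v, f (Fin.cons v q.1) q.2 := by
      simp only [S, sum_tuple_cons, Fintype.sum_prod_type]
      rw [sum_comm]
      refine sum_congr rfl fun y _ => ?_
      rw [sum_comm]
    have h1 : S ^ 2 ≤ n ^ k * m * S' := by
      have h := sq_sum_le_card_mul_sum_sq (s := (univ : Finset ((Fin k → V) × W)))
        (f := fun q => ∑ v, f (Fin.cons v q.1) q.2)
      rw [← hS] at h
      refine h.trans (le_of_eq ?_)
      have hc : (univ : Finset ((Fin k → V) × W)).card = n ^ k * m := by
        simp [n, m]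
      rw [hc]
      congr 1
      simp only [hS', g, Fintype.sum_prod_type, sq, sum_mul_sum]
    have h2 := ih g
    have hT : ∑ a : Fin k → V, ∑ b : Fin k → V, ∑ w, ∏ ε, g (boxChoice a b ε) w = T := by
      simp only [T, sum_tuple_cons, prod_cons_bool, boxChoice_cons, g, Fintype.sum_prod_type]
      -- both sides are sums over `(a, b, w, u, v)`; only the order of summation differs
      have e1 : ∀ G : (Fin k → V) → (Fin k → V) → W → V → V → ℕ,
          ∑ a, ∑ b, ∑ w, ∑ u, ∑ v, G a b w u v = ∑ u, ∑ a, ∑ v, ∑ b, ∑ w, G a b w u v := by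
        intro G
        refine Eq.trans (sum_congr rfl fun a _ => ?_) sum_comm
        calc ∑ b, ∑ w, ∑ u, ∑ v, G a b w u v = ∑ b, ∑ u, ∑ v, ∑ w, G a b w u v := by
              refine sum_congr rfl fun b _ => sum_comm.trans ?_
              exact sum_congr rfl fun u _ => sum_comm
          _ = ∑ u, ∑ v, ∑ b, ∑ w, G a b w u v :=
              sum_comm.trans (sum_congr rfl fun u _ => sum_comm)
      rw [e1]
      refine sum_congr rfl fun u _ => sum_congr rfl fun a _ => sum_congr rfl fun v _ =>
        sum_congr rfl fun b _ => sum_congr rfl fun w _ => prod_congr rfl fun ε _ => ?_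
      simp [mul_comm]
    rw [hT] at h2
    have hcard : Fintype.card (W × V × V) = m * n ^ 2 := by
      simp [Fintype.card_prod, n, m, sq]
    rw [hcard] at h2
    calc n ^ (2 * (k + 1)) * m * S ^ 2 ^ (k + 1)
        = n ^ (2 * (k + 1)) * m * (S ^ 2) ^ 2 ^ k := by rw [← pow_mul, pow_succ' 2 k]
      _ ≤ n ^ (2 * (k + 1)) * m * (n ^ k * m * S') ^ 2 ^ k := by gcongr
      _ = (n ^ k * m) ^ 2 ^ k * (n ^ (2 * k) * (m * n ^ 2) * S' ^ 2 ^ k) := by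
          rw [mul_pow (n ^ k * m) S']; ring
      _ ≤ (n ^ k * m) ^ 2 ^ k * ((n ^ k * (m * n ^ 2)) ^ 2 ^ k * T) := by gcongr
      _ = (n ^ (k + 1) * m) ^ 2 ^ (k + 1) * T := by
          rw [← mul_assoc, ← mul_pow, pow_succ' 2 k, pow_mul (n ^ (k + 1) * m)]
          congr 2; ring

/-- Two vertices completing the same `2^k` choices from a pair `(a, b)` with `a i ≠ b i` throughout
would span a box. -/
lemma card_completions_le_one {k n : ℕ} {E : Finset (Finset (Fin n))}
    (hE : ∀ e ∈ E, e.card = k + 1) (hbox : ¬ HasBox (k + 1) n E) (a b : Fin k → Fin n)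
    (hab : ∀ i, a i ≠ b i) :
    #{v : Fin n | ∀ ε, univ.image (Fin.cons v (boxChoice a b ε) : Fin (k + 1) → Fin n) ∈ E} ≤ 1 := by
  rw [card_le_one]
  intro u hu v hv
  simp only [mem_filter, mem_univ, true_and] at hu hv
  by_contra huv
  apply hbox
  have hmem : ∀ ε : Fin (k + 1) → Bool, univ.image
      (boxChoice (Fin.cons u a : Fin (k + 1) → Fin n) (Fin.cons v b) ε) ∈ E := by
    intro ε
    rw [← Fin.cons_self_tail ε, boxChoice_cons]
    cases ε 0
    · simpa using hu _
    · simpa using hv _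
  refine ⟨Fin.cons u a, Fin.cons v b, ?_, hmem⟩
  have hne : ∀ j, (Fin.cons u a : Fin (k + 1) → Fin n) j ≠
      (Fin.cons v b : Fin (k + 1) → Fin n) j := by
    intro j
    refine Fin.cases ?_ (fun i => ?_) j
    · simpa using huv
    · simpa using hab i
  rintro ⟨i, s⟩ ⟨j, t⟩ hst
  by_cases hij : i = j
  · subst hij
    have h := hne i
    have h' := h.symm
    cases s <;> cases t <;> simp_all
    -- otherwise both entries occur in one edge tuple, and edge tuples are injective
  · let ε : Fin (k + 1) → Bool := fun l => if l = i then s else t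
    have hinj : Function.Injective
        (boxChoice (Fin.cons u a : Fin (k + 1) → Fin n) (Fin.cons v b) ε) := by
      rw [← Set.injOn_univ, ← coe_univ, ← card_image_iff, hE _ (hmem ε), card_univ,
        Fintype.card_fin]
    refine absurd (hinj (a₁ := i) (a₂ := j) ?_) hij
    have hji : j ≠ i := fun h => hij h.symm
    simpa [boxChoice, ε, hji] using hst

lemma mul_card_agree_le {k n : ℕ} (i : Fin k) :
    n * #{p : (Fin k → Fin n) × (Fin k → Fin n) | p.1 i = p.2 i} ≤ n ^ (2 * k) := by
  have h : #((univ : Finset (Fin n)) ×ˢ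
      univ.filter fun p : (Fin k → Fin n) × (Fin k → Fin n) => p.1 i = p.2 i) ≤
      #(univ : Finset ((Fin k → Fin n) × (Fin k → Fin n))) := by
    -- the overwritten entry `a i` is recovered from `b i`
    refine card_le_card_of_injOn (fun q => (Function.update q.2.1 i q.1, q.2.2))
      (fun _ _ => by simp) ?_
    rintro ⟨v, a, b⟩ h1 ⟨v', a', b'⟩ h2 h
    simp only [coe_product, Set.mem_prod, coe_filter, mem_univ, true_and, Set.mem_ofPred_eq] at h1 h2
    simp only [Prod.mk.injEq] at h ⊢
    obtain ⟨h, rfl⟩ := h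
    refine ⟨by simpa using congrFun h i, ?_, rfl⟩
    funext j
    by_cases hj : j = i
    · subst hj; exact h1.2.trans h2.2.symm
    · simpa [hj] using congrFun h j
  simpa [card_product, two_mul, pow_add] using h

lemma sum_completions_le {k n : ℕ} {E : Finset (Finset (Fin n))}
    (hE : ∀ e ∈ E, e.card = k + 1) (hbox : ¬ HasBox (k + 1) n E) :
    ∑ a : Fin k → Fin n, ∑ b : Fin k → Fin n,
      #{v : Fin n | ∀ ε, univ.image (Fin.cons v (boxChoice a b ε) : Fin (k + 1) → Fin n) ∈ E} ≤
      (k + 1) * n ^ (2 * k) := by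
  have hD : ∀ a b : Fin k → Fin n,
      #{v : Fin n | ∀ ε, univ.image (Fin.cons v (boxChoice a b ε) : Fin (k + 1) → Fin n) ∈ E} ≤
      1 + ∑ i, if a i = b i then n else 0 := by
    intro a b
    by_cases hab : ∀ i, a i ≠ b i
    · exact (card_completions_le_one hE hbox a b hab).trans (Nat.le_add_right _ _)
    · push Not at hab
      obtain ⟨i, hi⟩ := hab
      have h1 := single_le_sum (f := fun i => if a i = b i then n else 0)
        (fun _ _ => Nat.zero_le _) (mem_univ i)
      have h2 := card_le_univ (α := Fin n)
        {v | ∀ ε, univ.image (Fin.cons v (boxChoice a b ε) : Fin (k + 1) → Fin n) ∈ E}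
      simp only [hi, if_true] at h1
      simp only [Fintype.card_fin] at h2
      omega
  calc _ ≤ ∑ a : Fin k → Fin n, ∑ b : Fin k → Fin n, (1 + ∑ i, if a i = b i then n else 0) :=
        sum_le_sum fun a _ => sum_le_sum fun b _ => hD a b
    _ = n ^ (2 * k) +
        ∑ i, n * #{p : (Fin k → Fin n) × (Fin k → Fin n) | p.1 i = p.2 i} := by
        rw [← Fintype.sum_prod_type', sum_add_distrib, sum_comm]
        congr 1
        · simp [two_mul, pow_add]
        · refine sum_congr rfl fun i _ => ?_
          rw [← sum_filter, sum_const, smul_eq_mul, mul_comm]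
    _ ≤ n ^ (2 * k) + ∑ i : Fin k, n ^ (2 * k) := by
        gcongr with i
        exact mul_card_agree_le i
    _ = (k + 1) * n ^ (2 * k) := by simp; ring

lemma card_edges_le_tuples {k n : ℕ} {E : Finset (Finset (Fin n))}
    (hE : ∀ e ∈ E, e.card = k + 1) :
    #E ≤ ∑ x : Fin k → Fin n, ∑ v : Fin n,
      if univ.image (Fin.cons v x : Fin (k + 1) → Fin n) ∈ E then 1 else 0 := by
  rw [sum_comm, ← sum_tuple_cons (fun x => if univ.image x ∈ E then 1 else 0), ← card_filter]
  refine (card_le_card fun e he => ?_).trans (card_image_le (f := fun x => univ.image x))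
  have him : univ.image (e.orderEmbOfFin (hE e he)) = e := by
    simp
  exact mem_image.2 ⟨e.orderEmbOfFin (hE e he), by simpa [him] using he, him⟩

lemma mul_card_pow_le {k n : ℕ} (hn : 0 < n) {E : Finset (Finset (Fin n))}
    (hE : ∀ e ∈ E, e.card = k + 1) (hbox : ¬ HasBox (k + 1) n E) :
    n * #E ^ 2 ^ k ≤ (k + 1) * n ^ ((k + 1) * 2 ^ k) := by
  have h := box_cauchy_schwarz k (V := Fin n) (W := Fin n)
    (fun x v => if univ.image (Fin.cons v x : Fin (k + 1) → Fin n) ∈ E then 1 else 0)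
  have hT := sum_completions_le hE hbox
  simp only [prod_ite_zero, prod_const_one, mem_univ, true_implies, ← card_filter,
    Fintype.card_fin] at h
  have hN := card_edges_le_tuples hE
  simp only [← card_filter] at hN
  refine le_of_mul_le_mul_left (a := n ^ (2 * k)) ?_ (by positivity)
  calc n ^ (2 * k) * (n * #E ^ 2 ^ k) = n ^ (2 * k) * n * #E ^ 2 ^ k := by ring
    _ ≤ _ := by gcongr
    _ ≤ _ := h
    _ ≤ (n ^ k * n) ^ 2 ^ k * ((k + 1) * n ^ (2 * k)) := by gcongr
    _ = n ^ (2 * k) * ((k + 1) * n ^ ((k + 1) * 2 ^ k)) := by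
        rw [← pow_succ, ← pow_mul]; ring

/-- Erdős's upper bound: for any `d ≥ 2`,
`ex_d(n, K_{2,…,2}^{(d)}) = O(n^{d - 1/2^{d-1}})`. -/
theorem box_problem_upper_bound (d : ℕ) (hd : 2 ≤ d) :
    ∃ C : ℝ, 0 < C ∧ ∀ n : ℕ, 0 < n →
      ∀ E : Finset (Finset (Fin n)),
        (∀ e ∈ E, e.card = d) → ¬ HasBox d n E →
        (E.card : ℝ) ≤ C * (n : ℝ) ^ ((d : ℝ) - 1 / (2 : ℝ) ^ (d - 1)) := by
  obtain ⟨k, rfl⟩ : ∃ k, d = k + 1 := ⟨d - 1, by omega⟩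
  refine ⟨(k : ℝ) + 1, by positivity, fun n hn E hE hbox => ?_⟩
  have hn' : (0 : ℝ) < n := by exact_mod_cast hn
  have key : (n : ℝ) * (#E : ℝ) ^ 2 ^ k ≤ (k + 1) * (n : ℝ) ^ ((k + 1) * 2 ^ k) := by
    exact_mod_cast mul_card_pow_le hn hE hbox
  have hpow : (n : ℝ) * ((n : ℝ) ^ (((k + 1 : ℕ) : ℝ) - 1 / (2 : ℝ) ^ (k + 1 - 1))) ^ 2 ^ k =
      (n : ℝ) ^ ((k + 1) * 2 ^ k) := by
    rw [← Real.rpow_mul_natCast hn'.le, mul_comm, ← Real.rpow_add_one hn'.ne',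
      ← Real.rpow_natCast (n : ℝ) ((k + 1) * 2 ^ k)]
    congr 1
    push_cast
    field_simp
    ring
  have hC : ((k : ℝ) + 1) ≤ ((k : ℝ) + 1) ^ 2 ^ k :=
    le_self_pow₀ (by linarith [Nat.cast_nonneg (α := ℝ) k]) (by positivity)
  refine le_of_pow_le_pow_left₀ (n := 2 ^ k) (by positivity) (by positivity) ?_
  refine le_of_mul_le_mul_left ?_ hn'
  rw [mul_pow, mul_left_comm, hpow]
  exact key.trans (by gcongr)
end

section
/- For any integer d ≥ 2, there exist a constant c > 0 and a threshold N such that for every n ≥ N there is a d-uniform hypergraph on n vertices containing no copy of K_{2,...,2}^{(d)} with at least c · n^{d - d/(2^d - 1)} edges. In other words, ex_d(n, K_{2,...,2}^{(d)}) = Ω(n^{d - d/(2^d-1)}). -/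
open Finset

/-- Among all colourings `α → Fin q`, a proportion `1 / q ^ #S` gives colour `0` to all of `S`. -/
lemma card_colourings {α : Type*} [Fintype α] [DecidableEq α] (q : ℕ) [NeZero q] (S : Finset α) :
    ((univ.filter fun f : α → Fin q => ∀ x ∈ S, f x = 0).card : ℝ)
      = (q : ℝ) ^ Fintype.card α / (q : ℝ) ^ S.card := by
  have h : (univ.filter fun f : α → Fin q => ∀ x ∈ S, f x = 0)
      = Fintype.piFinset (fun x => if x ∈ S then ({0} : Finset (Fin q)) else univ) := by
    ext f
    simp only [mem_filter, mem_univ, true_and, Fintype.mem_piFinset]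
    refine forall_congr' fun x => ?_
    by_cases hx : x ∈ S <;> simp [hx]
  have hq : (q : ℝ) ≠ 0 := by exact_mod_cast NeZero.ne q
  have h2 : ∏ x : α, (if x ∈ S then ({0} : Finset (Fin q)) else univ).card
      = q ^ (univ \ S).card := by
    have : ∀ x : α, (if x ∈ S then ({0} : Finset (Fin q)) else univ).card
        = if x ∈ univ \ S then q else 1 := by
      intro x
      by_cases hx : x ∈ S <;> simp [hx]
    simp only [this]
    rw [prod_ite_mem, univ_inter, prod_const]
  rw [h, Fintype.card_piFinset, h2, eq_div_iff (pow_ne_zero _ hq)]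
  push_cast
  rw [← pow_add, card_sdiff_add_card_eq_card (subset_univ S), card_univ]

/-- The deletion method: a family of `k`-sets indexed by `T` can be avoided inside `V` by a set of
size at least the expected number of points of a random subset of density `1 / q` minus the expected
number of members of the family that it contains. -/
lemma deletion {α ι : Type*} [Fintype α] [DecidableEq α] (q k : ℕ) (hq : 0 < q)
    (hk : 0 < k) (V : Finset α) (T : Finset ι) (S : ι → Finset α)
    (hS : ∀ i ∈ T, (S i).card = k) :
    ∃ I ⊆ V, (∀ i ∈ T, ¬ S i ⊆ I) ∧
      (V.card : ℝ) / q - T.card / (q : ℝ) ^ k ≤ I.card := by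
  classical
  have : NeZero q := ⟨hq.ne'⟩
  let X : (α → Fin q) → Finset α := fun f => V.filter fun v => f v = 0
  let Y : (α → Fin q) → Finset ι := fun f => T.filter fun i => ∀ x ∈ S i, f x = 0
  have hX : ∑ f : α → Fin q, ((X f).card : ℝ) = V.card * ((q : ℝ) ^ Fintype.card α / q) := by
    have h1 : ∀ f : α → Fin q, ((X f).card : ℝ) = ∑ v ∈ V, if f v = 0 then (1 : ℝ) else 0 := by
      intro f; simp [X]
    simp_rw [h1]
    rw [sum_comm, ← nsmul_eq_mul, ← sum_const]
    refine sum_congr rfl fun v _ => ?_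
    have := card_colourings q ({v} : Finset α)
    simpa using this
  have hY : ∑ f : α → Fin q, ((Y f).card : ℝ)
      = T.card * ((q : ℝ) ^ Fintype.card α / (q : ℝ) ^ k) := by
    have h1 : ∀ f : α → Fin q,
        ((Y f).card : ℝ) = ∑ i ∈ T, if ∀ x ∈ S i, f x = 0 then (1 : ℝ) else 0 := by
      intro f; simp [Y]
    simp_rw [h1]
    rw [sum_comm, ← nsmul_eq_mul, ← sum_const]
    refine sum_congr rfl fun i hi => ?_
    rw [← hS i hi, ← card_colourings q (S i)]
    simp
  obtain ⟨f, -, hf⟩ : ∃ f ∈ (univ : Finset (α → Fin q)),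
      (V.card : ℝ) / q - T.card / (q : ℝ) ^ k ≤ (X f).card - (Y f).card := by
    refine exists_le_of_sum_le univ_nonempty ?_
    rw [sum_sub_distrib (f := fun f => ((X f).card : ℝ)), hX, hY, sum_const, nsmul_eq_mul, card_univ, Fintype.card_fun,
      Fintype.card_fin]
    push_cast
    exact le_of_eq (by ring)
  have hne : ∀ i ∈ T, (S i).Nonempty := fun i hi => card_pos.1 (by rw [hS i hi]; exact hk)
  -- `D` consists of one chosen element from each monochromatic member of the family.
  let D : Finset α := (Y f).attach.image fun i => (hne i.1 (mem_filter.1 i.2).1).choose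
  refine ⟨X f \ D, sdiff_subset.trans (filter_subset _ _), fun i hi hsub => ?_, ?_⟩
  · have hiY : i ∈ Y f :=
      mem_filter.2 ⟨hi, fun x hx => (mem_filter.1 (mem_sdiff.1 (hsub hx)).1).2⟩
    exact (mem_sdiff.1 (hsub (hne i hi).choose_spec)).2
      (mem_image.2 ⟨⟨i, hiY⟩, mem_attach _ _, rfl⟩)
  · have hD : D.card ≤ (Y f).card := card_image_le.trans (card_attach).le
    have h3 : (X f).card ≤ (X f \ D).card + D.card := by
      have := le_card_sdiff D (X f)
      omega
    have h4 : ((X f).card : ℝ) ≤ (X f \ D).card + (Y f).card := by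
      exact_mod_cast h3.trans (by omega)
    linarith

/-- The set of edges of the box on the vertex sequences `p.1` and `p.2`. -/
def boxEdges (d n : ℕ) (p : (Fin d → Fin n) × (Fin d → Fin n)) : Finset (Finset (Fin n)) :=
  univ.image fun ε : Fin d → Bool => univ.image fun j => if ε j then p.2 j else p.1 j

/-- The `2 d` vertices of the box on the vertex sequences `p.1` and `p.2` are distinct. -/
def IsBoxPair (d n : ℕ) (p : (Fin d → Fin n) × (Fin d → Fin n)) : Prop :=
  Function.Injective (fun r : Fin d × Bool => if r.2 then p.2 r.1 else p.1 r.1)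

lemma card_boxEdges {d n : ℕ} {p : (Fin d → Fin n) × (Fin d → Fin n)} (hp : IsBoxPair d n p) :
    (boxEdges d n p).card = 2 ^ d := by
  rw [boxEdges, card_image_of_injective]
  · simp
  · intro ε δ h
    funext j
    have hj : (if ε j then p.2 j else p.1 j) ∈
        univ.image fun j => if δ j then p.2 j else p.1 j := by
      have hmem := mem_image_of_mem (fun j => if ε j then p.2 j else p.1 j) (mem_univ j)
      exact (Finset.ext_iff.1 h _).1 hmem
    obtain ⟨i, -, hi⟩ := mem_image.1 hj
    have := @hp (i, δ i) (j, ε j) hi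
    simp only [Prod.mk.injEq] at this
    obtain ⟨rfl, h2⟩ := this
    exact h2.symm

/-- For every density `1 / q` there is a box-free hypergraph with `C(n, d) / q - n ^ (2 d) / q ^ k`
edges, where `k = 2 ^ d`. -/
lemma exists_boxFree_s5 (d n q : ℕ) (hq : 0 < q) :
    ∃ E : Finset (Finset (Fin n)), (∀ e ∈ E, e.card = d) ∧ ¬ HasBox d n E ∧
      (n.choose d : ℝ) / q - (n : ℝ) ^ (2 * d) / (q : ℝ) ^ (2 ^ d) ≤ E.card := by
  classical
  obtain ⟨E, hEV, hE, hcard⟩ := deletion q (2 ^ d) hq (by positivity)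
    (powersetCard d (univ : Finset (Fin n))) (univ.filter (IsBoxPair d n)) (boxEdges d n)
    (fun p hp => card_boxEdges (mem_filter.1 hp).2)
  refine ⟨E, fun e he => (mem_powersetCard.1 (hEV he)).2, ?_, le_trans ?_ hcard⟩
  · rintro ⟨a, b, hinj, hab⟩
    refine hE (a, b) (mem_filter.2 ⟨mem_univ _, hinj⟩) fun e he => ?_
    obtain ⟨ε, -, rfl⟩ := mem_image.1 he
    exact hab ε
  · have hT : ((univ.filter (IsBoxPair d n)).card : ℝ) ≤ (n : ℝ) ^ (2 * d) := by
      have := card_filter_le (univ : Finset ((Fin d → Fin n) × (Fin d → Fin n))) (IsBoxPair d n)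
      simp only [card_univ, Fintype.card_prod, Fintype.card_fun, Fintype.card_fin] at this
      rw [two_mul, pow_add]
      exact_mod_cast this
    rw [card_powersetCard, card_univ, Fintype.card_fin]
    gcongr

/-- The probabilistic deletion lower bound: for any `d ≥ 2`,
`ex_d(n, K_{2,…,2}^{(d)}) = Ω(n^{d - d/(2^d - 1)})`. -/
theorem deletion_lower_bound (d : ℕ) (hd : 2 ≤ d) :
    ∃ c : ℝ, 0 < c ∧ ∃ N : ℕ, ∀ n : ℕ, N ≤ n →
      ∃ E : Finset (Finset (Fin n)),
        (∀ e ∈ E, e.card = d) ∧ ¬ HasBox d n E ∧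
        c * (n : ℝ) ^ ((d : ℝ) - (d : ℝ) / ((2 : ℝ) ^ d - 1)) ≤ (E.card : ℝ) := by
  obtain ⟨A, hA⟩ : ∃ A : ℝ, A = 2 ^ d * d.factorial := ⟨_, rfl⟩
  have hA1 : 1 ≤ A := hA ▸ one_le_mul_of_one_le_of_one_le (one_le_pow₀ one_le_two)
    (by exact_mod_cast d.factorial_pos)
  have hA0 : 0 < A := by linarith
  refine ⟨1 / (8 * A * A), by positivity, 2 * d, fun n hn => ?_⟩
  have hn1 : (1 : ℝ) ≤ n := by exact_mod_cast (by omega : 1 ≤ n)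
  have hn0 : (0 : ℝ) < n := by linarith
  obtain ⟨m, hm⟩ : ∃ m, 2 ^ d = m + 1 := ⟨2 ^ d - 1, by have := Nat.one_le_two_pow (n := d); omega⟩
  have hm1 : 1 ≤ m := by
    have : 2 ^ 1 < 2 ^ d := Nat.pow_lt_pow_right (by norm_num) (by omega)
    omega
  have hmR : (2 : ℝ) ^ d - 1 = m := by
    have : (2 : ℝ) ^ d = m + 1 := by exact_mod_cast hm
    linarith
  have hm0 : (m : ℝ) ≠ 0 := by exact_mod_cast (by omega : m ≠ 0)
  set K : ℝ := 2 * A with hK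
  have hK1 : 1 ≤ K := by linarith
  set t : ℝ := (n : ℝ) ^ ((d : ℝ) / m) with ht
  have ht1 : 1 ≤ t := Real.one_le_rpow hn1 (by positivity)
  have htm : t ^ m = (n : ℝ) ^ d := by
    rw [ht, ← Real.rpow_natCast, ← Real.rpow_mul hn0.le, div_mul_cancel₀ _ hm0, Real.rpow_natCast]
  have hKt : 1 ≤ K * t := one_le_mul_of_one_le_of_one_le hK1 ht1
  obtain ⟨q, hq⟩ : ∃ q, q = ⌈K * t⌉₊ := ⟨_, rfl⟩
  have hql : K * t ≤ q := hq ▸ Nat.le_ceil _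
  have hqu : (q : ℝ) ≤ 2 * (K * t) := by
    have := Nat.ceil_lt_add_one (by linarith : 0 ≤ K * t)
    rw [← hq] at this
    linarith
  have hq0 : (0 : ℝ) < q := by linarith
  obtain ⟨E, h1, h2, h3⟩ := exists_boxFree_s5 d n q (by exact_mod_cast hq0)
  refine ⟨E, h1, h2, le_trans ?_ h3⟩
  have hchoose : (n : ℝ) ^ d / A ≤ n.choose d := by
    refine le_trans ?_ (Nat.pow_le_choose d n)
    rw [hA, ← div_div, ← div_pow]
    have h : (n : ℝ) / 2 ≤ (n + 1 - d : ℕ) := by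
      rw [div_le_iff₀ two_pos]
      exact_mod_cast (by omega : n ≤ (n + 1 - d) * 2)
    gcongr
  have hqm : K * (n : ℝ) ^ d ≤ (q : ℝ) ^ m := by
    calc K * (n : ℝ) ^ d ≤ K ^ m * t ^ m := by
          rw [htm]; gcongr; exact le_self_pow₀ hK1 (by omega)
      _ = (K * t) ^ m := (mul_pow _ _ _).symm
      _ ≤ (q : ℝ) ^ m := by gcongr
  -- At most half of the expected number of edges is deleted.
  have hdel : (n : ℝ) ^ (2 * d) / (q : ℝ) ^ (2 ^ d) ≤ (n : ℝ) ^ d / (K * q) := by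
    rw [hm, pow_succ, two_mul, pow_add, div_le_div_iff₀ (by positivity) (by positivity)]
    calc (n : ℝ) ^ d * (n : ℝ) ^ d * (K * q) = (n : ℝ) ^ d * ((K * (n : ℝ) ^ d) * q) := by ring
      _ ≤ (n : ℝ) ^ d * ((q : ℝ) ^ m * q) := by gcongr
  have hmain : (n : ℝ) ^ d / (K * q) ≤
      (n.choose d : ℝ) / q - (n : ℝ) ^ (2 * d) / (q : ℝ) ^ (2 ^ d) := by
    have h4 : (n : ℝ) ^ d / A / q ≤ (n.choose d : ℝ) / q := by gcongr
    have h5 : (n : ℝ) ^ d / A / q = 2 * ((n : ℝ) ^ d / (K * q)) := by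
      rw [hK]; field_simp
    linarith
  refine le_trans ?_ hmain
  rw [hmR, Real.rpow_sub hn0, Real.rpow_natCast, ← ht]
  calc 1 / (8 * A * A) * ((n : ℝ) ^ d / t)
      = (n : ℝ) ^ d / (K * (2 * (K * t))) := by rw [hK]; field_simp; norm_num
    _ ≤ (n : ℝ) ^ d / (K * q) := by gcongr
end

section
/- Let F be a finite field with q elements, let s and d be positive integers, let V = F^s, and for each j = 1, ..., d let v_j^0, v_j^1 ∈ V be linearly independent. Then the number of multilinear functions T : V^d → F satisfying T(v_1^{ε_1}, ..., v_d^{ε_d}) = 1 for all 2^d choices of ε_1, ..., ε_d ∈ {0,1} is exactly q^{s^d - 2^d}. Equivalently, a uniformly random multilinear function T : V^d → F satisfies all 2^d of these equations with probability exactly q^{-2^d}. -/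
/-!
Evaluation at the `2 ^ d` points `(v_1^{ε_1}, …, v_d^{ε_d})` is a linear map from the space of
multilinear maps, of dimension `s ^ d`, to `F ^ (2 ^ d)`. Since each pair `v_j^0, v_j^1` is linearly
independent, there are functionals dual to it, and products of these functionals show that
evaluation is surjective (`boxEval_surjective`). By rank–nullity its kernel has dimension
`s ^ d - 2 ^ d`, and the solution set of the equations is a translate of this kernel.
-/

/-- The linear map sending a multilinear `T` to the tuple of its values at the points
`(v_1^{ε_1}, …, v_d^{ε_d})`, indexed by `ε`. -/
def boxEval {F : Type*} [Field F] {s d : ℕ} (v : Fin d → Bool → (Fin s → F)) :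
    MultilinearMap F (fun _ : Fin d => Fin s → F) F →ₗ[F] ((Fin d → Bool) → F) where
  toFun T ε := T (fun j => v j (ε j))
  map_add' _ _ := rfl
  map_smul' _ _ := rfl

theorem exists_dual_functionals {F : Type*} [Field F] {s : ℕ} {w : Bool → (Fin s → F)}
    (hw : LinearIndependent F w) :
    ∃ f : Bool → ((Fin s → F) →ₗ[F] F), ∀ a b, f a (w b) = if a = b then 1 else 0 := by
  obtain ⟨g, hg⟩ := LinearMap.exists_leftInverse_of_injective
    (Finsupp.linearCombination F w) (LinearMap.ker_eq_bot.2 hw)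
  refine ⟨fun a => Finsupp.lapply a ∘ₗ g, fun a b => ?_⟩
  have h := LinearMap.congr_fun hg (Finsupp.single b 1)
  simp only [LinearMap.comp_apply, Finsupp.linearCombination_single, one_smul,
    LinearMap.id_apply] at h
  simp [h, Finsupp.single_apply, eq_comm]

theorem boxEval_surjective {F : Type*} [Field F] {s d : ℕ} (v : Fin d → Bool → (Fin s → F))
    (hv : ∀ j, LinearIndependent F (v j)) : Function.Surjective (boxEval v) := by
  choose f hf using fun j => exists_dual_functionals (hv j)
  intro c
  -- The multilinear map `∏ j, f j (δ j)` is the indicator of `δ` on the evaluation points.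
  refine ⟨∑ δ : Fin d → Bool, c δ • (MultilinearMap.mkPiRing F (Fin d) (1 : F)).compLinearMap
    (fun j => f j (δ j)), ?_⟩
  ext ε
  have h : ∀ δ : Fin d → Bool,
      (∏ j, if δ j = ε j then (1 : F) else 0) = if δ = ε then 1 else 0 := by
    intro δ
    rw [Fintype.prod_ite_zero]
    simp [funext_iff]
  simp [boxEval, hf, h]

theorem finrank_multilinearMap (F : Type*) [Field F] (s d : ℕ) :
    Module.finrank F (MultilinearMap F (fun _ : Fin d => Fin s → F) F) = s ^ d := by
  rw [Module.finrank_eq_card_basis (Basis.multilinearMap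
    (fun _ : Fin d => Pi.basisFun F (Fin s)) (Module.Basis.singleton Unit F))]
  simp

/-- With `V = F^s` over a finite field `F` with `q` elements and `v_j^0, v_j^1 ∈ V`
linearly independent for each `j`, the number of multilinear `T : V^d → F` with
`T(v_1^{ε_1}, …, v_d^{ε_d}) = 1` for all `2^d` choices of `ε_j ∈ {0,1}` is exactly
`q^(s^d - 2^d)`; equivalently, a uniformly random multilinear `T` satisfies all these
equations with probability exactly `q^{-2^d}`. -/
theorem count_multilinear_box_equations (F : Type*) [Field F] [Fintype F]
    (q s d : ℕ) (hq : Fintype.card F = q) (hs : 0 < s) (hd : 0 < d)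
    (v : Fin d → Bool → (Fin s → F)) (hv : ∀ j, LinearIndependent F (v j)) :
    Nat.card {T : MultilinearMap F (fun _ : Fin d => Fin s → F) F //
        ∀ ε : Fin d → Bool, T (fun j => v j (ε j)) = 1}
      = q ^ (s ^ d - 2 ^ d) := by
  have hsurj := boxEval_surjective v hv
  obtain ⟨T₀, hT₀⟩ := hsurj 1
  have e : {T : MultilinearMap F (fun _ : Fin d => Fin s → F) F //
      ∀ ε : Fin d → Bool, T (fun j => v j (ε j)) = 1} ≃ LinearMap.ker (boxEval v) :=
    (Equiv.subRight T₀).subtypeEquiv fun T => by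
      rw [Equiv.subRight_apply, LinearMap.mem_ker, map_sub, hT₀, sub_eq_zero, funext_iff]
      rfl
  have hrank := LinearMap.finrank_range_add_finrank_ker (boxEval v)
  rw [LinearMap.range_eq_top.2 hsurj, finrank_top, finrank_multilinearMap] at hrank
  simp only [Module.finrank_fintype_fun_eq_card, Fintype.card_pi, Fintype.card_bool,
    Finset.prod_const, Finset.card_univ, Fintype.card_fin] at hrank
  rw [Nat.card_congr e, Module.natCard_eq_pow_finrank (K := F), Nat.card_eq_fintype_card, hq,
    ← hrank, Nat.add_sub_cancel_left]
end

section
/- Let F be a finite field with q elements, let s, d, r be positive integers, and let V = F^s. Then the number of pairs ((T_1, ..., T_r), (v_1^0, v_1^1, ..., v_d^0, v_d^1)), where each T_i : V^d → F is a multilinear function and v_j^0, v_j^1 ∈ V satisfy v_j^0 ≠ v_j^1 for all j, such that T_i(v_1^{ε_1}, ..., v_d^{ε_d}) = 1 for all i = 1, ..., r and all ε_1, ..., ε_d ∈ {0,1}, is exactly (q^s - 1)^d · (q^s - q)^d · q^{r·s^d - 2^d·r}. Equivalently, if T_1, ..., T_r are independent uniformly random multilinear functions V^d → F and ℱ denotes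 the set of such tuples (v_1^0, v_1^1, ..., v_d^0, v_d^1), then E[|ℱ|] = (q^s - 1)^d (q^s - q)^d q^{-2^d r}. -/
/-!
A box `(v_j^0, v_j^1)_j` on which some multilinear map is constantly `1` has every pair
`(v_j^0, v_j^1)` linearly independent: fixing all arguments but the `j`-th gives a linear functional
equal to `1` at two distinct vectors. Hence the pairs being counted are exactly a choice of
`d` linearly independent pairs in `F^s`, of which there are `((q^s - 1)(q^s - q))^d`, together with
`r` independent choices of a multilinear map with value `1` at the `2^d` corners of the box.

For linearly independent families, evaluation at the corners is a surjective linear map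
(`cornerEval_surjective`): products of dual functionals interpolate any prescribed values. So every
set of prescribed corner values is attained by the same number of multilinear maps
(`card_fiber_mul`). The total number of multilinear maps, `q^(s^d)`, comes from the same evaluation
map, taken at the standard basis, where it is also injective.
-/

namespace BoxCount

variable {F : Type*} [Field F] {ι V : Type*} {d : ℕ} [AddCommGroup V] [Module F V]

/-- Evaluation of multilinear maps at all the points `(v_1^{ε_1}, …, v_d^{ε_d})`, for families
`v_1, …, v_d` of vectors with a common index type `ι`. -/
def cornerEval (v : Fin d → ι → V) :
    MultilinearMap F (fun _ : Fin d => V) F →ₗ[F] ((Fin d → ι) → F) where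
  toFun T ε := T fun j => v j (ε j)
  map_add' _ _ := rfl
  map_smul' _ _ := rfl

theorem exists_dual {v : ι → V} (hv : LinearIndependent F v) :
    ∃ g : V →ₗ[F] (ι →₀ F), ∀ i, g (v i) = Finsupp.single i 1 := by
  obtain ⟨g, hg⟩ := LinearMap.exists_leftInverse_of_injective
    (Finsupp.linearCombination F v) (LinearMap.ker_eq_bot.2 hv)
  refine ⟨g, fun i => ?_⟩
  have h := LinearMap.congr_fun hg (Finsupp.single i 1)
  simpa using h

theorem cornerEval_surjective [Finite ι] {v : Fin d → ι → V}
    (hv : ∀ j, LinearIndependent F (v j)) :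
    Function.Surjective (cornerEval (F := F) v) := by
  classical
  have := Fintype.ofFinite ι
  intro c
  choose g hg using fun j => exists_dual (hv j)
  refine ⟨∑ δ : Fin d → ι, c δ • (MultilinearMap.mkPiAlgebra F (Fin d) F).compLinearMap
    (fun j => Finsupp.lapply (δ j) ∘ₗ g j), ?_⟩
  ext ε
  simp only [cornerEval, LinearMap.coe_mk, AddHom.coe_mk, sum_apply,
    smul_apply, MultilinearMap.compLinearMap_apply,
    MultilinearMap.mkPiAlgebra_apply, LinearMap.comp_apply, hg, Finsupp.lapply_apply, smul_eq_mul]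
  rw [Finset.sum_eq_single ε]
  · simp
  · intro δ _ hδ
    obtain ⟨j, hj⟩ := Function.ne_iff.1 hδ
    rw [Finset.prod_eq_zero (Finset.mem_univ j), mul_zero]
    simp [Ne.symm hj]
  · simp

theorem card_multilinearMap [Fintype F] (s d : ℕ) :
    Nat.card (MultilinearMap F (fun _ : Fin d => Fin s → F) F) = Fintype.card F ^ s ^ d := by
  have hb : Function.Bijective
      (cornerEval (F := F) fun _ : Fin d => (Pi.basisFun F (Fin s) : Fin s → Fin s → F)) := by
    refine ⟨fun T U h => ?_,
      cornerEval_surjective fun _ => (Pi.basisFun F (Fin s)).linearIndependent⟩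
    exact Module.Basis.ext_multilinear (fun _ => Pi.basisFun F (Fin s)) fun ε => congrFun h ε
  rw [Nat.card_congr (Equiv.ofBijective _ hb)]
  simp

/-- All fibres of a surjective linear map have the same cardinality, hence this product formula. -/
theorem card_fiber_mul {M N : Type*} [AddCommGroup M] [AddCommGroup N] [Module F M] [Module F N]
    (f : M →ₗ[F] N) (hf : Function.Surjective f) (y : N) :
    Nat.card N * Nat.card {x // f x = y} = Nat.card M := by
  rw [← Nat.card_prod]
  choose g hg using hf
  -- translation by `g z - g y` carries the fibre over `y` onto the fibre over `z`
  exact Nat.card_congr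
    { toFun := fun p => p.2.1 - g y + g p.1
      invFun := fun x => (f x, ⟨x - g (f x) + g y, by simp [hg]⟩)
      left_inv := by
        rintro ⟨z, x, hx⟩
        have h : f (x - g y + g z) = z := by simp [hg, hx]
        ext <;> simp [h]
      right_inv := fun x => by simp }

theorem card_fiber_one [Fintype F] {s d : ℕ} {v : Fin d → Bool → Fin s → F} (hs : 2 ≤ s)
    (hv : ∀ j, LinearIndependent F (v j)) :
    Nat.card {T : MultilinearMap F (fun _ : Fin d => Fin s → F) F //
      ∀ ε : Fin d → Bool, T (fun j => v j (ε j)) = 1} = Fintype.card F ^ (s ^ d - 2 ^ d) := by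
  have h := card_fiber_mul (cornerEval (F := F) v) (cornerEval_surjective hv) 1
  rw [card_multilinearMap] at h
  have hc : Nat.card ((Fin d → Bool) → F) = Fintype.card F ^ 2 ^ d := by simp
  rw [hc, ← Nat.add_sub_cancel' (Nat.pow_le_pow_left hs d), pow_add] at h
  rw [← Nat.eq_of_mul_eq_mul_left (pow_pos Fintype.card_pos _) h]
  exact Nat.card_congr (Equiv.subtypeEquivRight fun T => funext_iff.symm)

theorem two_le_of_linearIndependent {s : ℕ} {v : Bool → Fin s → F}
    (hv : LinearIndependent F v) : 2 ≤ s := by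
  simpa using hv.fintype_card_le_finrank

/-- For `s = 1` both sides vanish, the right-hand one through the factor `q^s - q`. -/
theorem card_independent_pairs [Fintype F] {s : ℕ} (hs : 0 < s) :
    Nat.card {v : Bool → Fin s → F // LinearIndependent F v} =
      (Fintype.card F ^ s - 1) * (Fintype.card F ^ s - Fintype.card F) := by
  rcases Nat.lt_or_ge s 2 with h | h
  · obtain rfl : s = 1 := by omega
    have : IsEmpty {v : Bool → Fin 1 → F // LinearIndependent F v} :=
      ⟨fun v => by have := two_le_of_linearIndependent v.2; omega⟩
    simp
  · have h2 := card_linearIndependent (K := F) (V := Fin s → F) (k := 2) (by simpa using h)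
    rw [Fin.prod_univ_two] at h2
    simp only [Module.finrank_fin_fun, Fin.val_zero, Fin.val_one, pow_zero, pow_one] at h2
    rw [← h2]
    refine Nat.card_congr (Equiv.subtypeEquiv (finTwoEquiv.symm.arrowCongr (Equiv.refl _))
      fun v => ?_)
    exact (linearIndependent_equiv finTwoEquiv).symm

theorem linearIndependent_of_functional {v : Bool → V} (hne : v false ≠ v true) (φ : V →ₗ[F] F)
    (hφ : ∀ b, φ (v b) = 1) : LinearIndependent F v := by
  rw [Fintype.linearIndependent_iff]
  intro a ha
  rw [Fintype.sum_bool] at ha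
  have h : a true + a false = 0 := by simpa [hφ] using congrArg φ ha
  have hf : a false = -a true := by linear_combination h
  rw [hf, neg_smul, ← sub_eq_add_neg, ← smul_sub, smul_eq_zero, sub_eq_zero] at ha
  have ht : a true = 0 := ha.resolve_right hne.symm
  rintro (_ | _) <;> simp [hf, ht]

theorem linearIndependent_of_box {v : Fin d → Bool → V} (hne : ∀ j, v j false ≠ v j true)
    (T : MultilinearMap F (fun _ : Fin d => V) F)
    (hT : ∀ ε : Fin d → Bool, T (fun j => v j (ε j)) = 1) (j : Fin d) :
    LinearIndependent F (v j) := by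
  refine linearIndependent_of_functional (hne j) (T.toLinearMap (fun k => v k false) j) fun b => ?_
  rw [MultilinearMap.toLinearMap_apply, ← hT (Function.update (fun _ => false) j b)]
  congr 1
  ext k
  by_cases hk : k = j
  · subst hk; simp
  · simp [hk]

end BoxCount

open BoxCount in

/-- Claim 8 (expected number of ordered boxes): the number of pairs
`((T_1, …, T_r), (v_1^0, v_1^1, …, v_d^0, v_d^1))` with each `T_i : V^d → F`
multilinear, `v_j^0 ≠ v_j^1` in `V = F^s` for all `j`, and
`T_i(v_1^{ε_1}, …, v_d^{ε_d}) = 1` for all `i` and all `ε_j ∈ {0,1}`, is exactly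
`(q^s - 1)^d (q^s - q)^d q^(r s^d - 2^d r)`; equivalently,
`E[|ℱ|] = (q^s - 1)^d (q^s - q)^d q^{-2^d r}`. -/
theorem count_box_pairs (F : Type*) [Field F] [Fintype F]
    (q s d r : ℕ) (hq : Fintype.card F = q) (hs : 0 < s) (hd : 0 < d) (hr : 0 < r) :
    Nat.card {p : (Fin r → MultilinearMap F (fun _ : Fin d => Fin s → F) F)
        × (Fin d → Bool → (Fin s → F)) //
        (∀ j : Fin d, p.2 j false ≠ p.2 j true) ∧
        ∀ (i : Fin r) (ε : Fin d → Bool), p.1 i (fun j => p.2 j (ε j)) = 1}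
      = (q ^ s - 1) ^ d * (q ^ s - q) ^ d * q ^ (r * s ^ d - 2 ^ d * r) := by
  subst hq
  let e : {p : (Fin r → MultilinearMap F (fun _ : Fin d => Fin s → F) F)
        × (Fin d → Bool → (Fin s → F)) //
        (∀ j : Fin d, p.2 j false ≠ p.2 j true) ∧
        ∀ (i : Fin r) (ε : Fin d → Bool), p.1 i (fun j => p.2 j (ε j)) = 1} ≃
      Σ v : Fin d → {w : Bool → Fin s → F // LinearIndependent F w},
        (Fin r → {T : MultilinearMap F (fun _ : Fin d => Fin s → F) F //
          ∀ ε : Fin d → Bool, T (fun j => (v j).1 (ε j)) = 1}) :=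
    { toFun := fun p => ⟨fun j => ⟨p.1.2 j,
          linearIndependent_of_box p.2.1 (p.1.1 ⟨0, hr⟩) (p.2.2 _) j⟩,
        fun i => ⟨p.1.1 i, p.2.2 i⟩⟩
      invFun := fun x => ⟨(fun i => (x.2 i).1, fun j => (x.1 j).1),
        fun j h => Bool.false_ne_true ((x.1 j).2.injective h), fun i => (x.2 i).2⟩
      left_inv := fun _ => rfl
      right_inv := fun _ => rfl }
  have hfin : Finite (MultilinearMap F (fun _ : Fin d => Fin s → F) F) :=
    Finite.of_injective _ DFunLike.coe_injective
  have := Fintype.ofFinite (Fin d → {w : Bool → Fin s → F // LinearIndependent F w})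
  have hcard (v : Fin d → {w : Bool → Fin s → F // LinearIndependent F w}) :
      Nat.card (Fin r → {T : MultilinearMap F (fun _ : Fin d => Fin s → F) F //
          ∀ ε : Fin d → Bool, T (fun j => (v j).1 (ε j)) = 1}) =
        Fintype.card F ^ (r * s ^ d - 2 ^ d * r) := by
    rw [Nat.card_fun, card_fiber_one (two_le_of_linearIndependent (v ⟨0, hd⟩).2) fun j => (v j).2,
      Nat.card_fin, ← pow_mul, Nat.sub_mul, mul_comm r]
  rw [Nat.card_congr e, Nat.card_sigma, Finset.sum_congr rfl fun v _ => hcard v, Finset.sum_const,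
    Finset.card_univ, ← Nat.card_eq_fintype_card, Nat.card_fun, Nat.card_fin,
    card_independent_pairs hs, smul_eq_mul, mul_pow]
end

section
/- Let F be a finite field with q elements, let s, d, r be positive integers, let V = F^s, and let T_1, ..., T_r : V^d → F be multilinear functions. Define ℰ as the set of tuples (v_1, ..., v_d) ∈ V^d with T_i(v_1, ..., v_d) = 1 for all i; define ℱ as the set of tuples (v_1^0, v_1^1, ..., v_d^0, v_d^1) ∈ V^{2d} with v_j^0 ≠ v_j^1 for all j and T_i(v_1^{ε_1}, ..., v_d^{ε_d}) = 1 for all i = 1, ..., r and all ε_1, ..., ε_d ∈ {0,1}; and define ℬ as the set of (v_1, ..., v_d) ∈ ℰ for which there exists (v'_1, ..., v'_d) ∈ V^d with (v_1, v'_1, ..., v_d, v'_d) ∈ ℱ. Then (q - 1)^d · |ℬ| ≤ |ℱ|. -/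
/-!
Fix `v ∈ ℬ` with a witness `v'`. Restricted to the line through `v_j` and `v'_j` in each coordinate,
a multilinear map is affine in each coordinate separately, so being `1` on the vertices of the box
forces it to be `1` on the whole product of lines (`eq_one_of_box`). Hence for every choice of units
`c_1, …, c_d` the pair `v`, `(v_j + c_j (v'_j - v_j))_j` is again a member of `ℱ`. As `v_j ≠ v'_j`,
distinct pairs `(v, c)` give distinct members, which gives `(q - 1)^d |ℬ| ≤ |ℱ|`.
-/

/-- A multilinear map equal to `1` on all vertices of a box is `1` at every point whose coordinates
in `S` are arbitrary on the lines through the corresponding sides, and whose other coordinates are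
those of a vertex. -/
lemma eq_one_of_box {F : Type*} [Field F] {M : Type*} [AddCommGroup M] [Module F M] {d : ℕ}
    (T : MultilinearMap F (fun _ : Fin d => M) F) (w : Fin d → Bool → M)
    (h : ∀ ε : Fin d → Bool, T (fun j => w j (ε j)) = 1) (S : Finset (Fin d)) :
    ∀ x : Fin d → M,
      (∀ j ∈ S, ∃ c : F, x j = w j false + c • (w j true - w j false)) →
      (∀ j ∉ S, ∃ b, x j = w j b) → T x = 1 := by
  induction S using Finset.induction_on with
  | empty =>
    intro x _ hx
    choose ε hε using fun j => hx j (Finset.notMem_empty j)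
    rw [funext hε]
    exact h ε
  | insert a S ha ih =>
    intro x hx hx'
    obtain ⟨c, hc⟩ := hx a (Finset.mem_insert_self a S)
    have key : ∀ b, T (Function.update x a (w a b)) = 1 := by
      intro b
      apply ih
      · intro j hj
        have hja : j ≠ a := fun e => ha (e ▸ hj)
        rw [Function.update_of_ne hja]
        exact hx j (Finset.mem_insert_of_mem hj)
      · intro j hj
        by_cases hja : j = a
        · subst hja
          exact ⟨b, Function.update_self ..⟩
        · rw [Function.update_of_ne hja]
          exact hx' j (by simp [hja, hj])
    rw [← Function.update_eq_self a x, hc, T.map_update_add, T.map_update_smul, T.map_update_sub,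
      key, key]
    simp

/-- Lemma 9 (key lemma): with `V = F^s` over a finite field `F` with `q` elements and
multilinear `T_1, …, T_r : V^d → F`, let `ℰ` be the set of tuples on which all `T_i`
equal `1`, `ℱ` the set of ordered boxes, and `ℬ ⊆ ℰ` the set of tuples extendable to a
member of `ℱ`. Then `(q-1)^d ⬝ |ℬ| ≤ |ℱ|`. -/
theorem bad_edges_bound (F : Type*) [Field F] [Fintype F]
    (q s d r : ℕ) (hq : Fintype.card F = q) (hs : 0 < s) (hd : 0 < d) (hr : 0 < r)
    (T : Fin r → MultilinearMap F (fun _ : Fin d => Fin s → F) F)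
    (E : Set (Fin d → (Fin s → F)))
    (hE : E = {v | ∀ i : Fin r, T i v = 1})
    (Fam : Set (Fin d → Bool → (Fin s → F)))
    (hFam : Fam = {w | (∀ j : Fin d, w j false ≠ w j true) ∧
      ∀ (i : Fin r) (ε : Fin d → Bool), T i (fun j => w j (ε j)) = 1})
    (B : Set (Fin d → (Fin s → F)))
    (hB : B = {v ∈ E | ∃ v' : Fin d → (Fin s → F),
      (fun j b => if b then v' j else v j) ∈ Fam}) :
    (q - 1) ^ d * B.ncard ≤ Fam.ncard := by
  classical
  have hmem : ∀ v : B, ∃ v' : Fin d → (Fin s → F),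
      (fun j b => if b then v' j else v.1 j) ∈ Fam := by
    rintro ⟨v, hv⟩
    rw [hB] at hv
    exact hv.2
  choose v' hv' using hmem
  have hne : ∀ (v : B) (j : Fin d), v' v j - v.1 j ≠ 0 := by
    intro v j
    have h := hv' v
    rw [hFam] at h
    have h1 := h.1 j
    simp only [Bool.false_eq_true, if_false, if_true] at h1
    exact sub_ne_zero.mpr h1.symm
  have hin : ∀ (v : B) (c : Fin d → Fˣ), (fun (j : Fin d) (b : Bool) =>
      if b then v.1 j + (c j : F) • (v' v j - v.1 j) else v.1 j) ∈ Fam := by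
    intro v c
    have h := hv' v
    rw [hFam] at h ⊢
    refine ⟨fun j => ?_, fun i ε => ?_⟩
    · simpa using hne v j
    · refine eq_one_of_box (T i) (fun j b => if b then v' v j else v.1 j) (h.2 i) Finset.univ _
        (fun j _ => ?_) (by simp)
      cases hb : ε j
      · exact ⟨0, by simp⟩
      · exact ⟨c j, by simp⟩
  let f : B × (Fin d → Fˣ) → Fam := fun p => ⟨_, hin p.1 p.2⟩
  have hf : Function.Injective f := by
    rintro ⟨v, c⟩ ⟨v₂, c₂⟩ heq
    have e := Subtype.ext_iff.mp heq
    have e0 : v = v₂ := by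
      apply Subtype.ext
      funext j
      simpa [f] using congrFun (congrFun e j) false
    subst e0
    refine Prod.ext rfl (funext fun j => Units.ext ?_)
    have e1 := congrFun (congrFun e j) true
    simp only [f, if_true, add_right_inj] at e1
    exact smul_left_injective F (hne v j) e1
  have hcard := Nat.card_le_card_of_injective f hf
  rw [Nat.card_prod, Nat.card_fun, Nat.card_coe_set_eq, Nat.card_coe_set_eq,
    Nat.card_eq_fintype_card (α := Fˣ), Fintype.card_units, hq, Nat.card_fin] at hcard
  rwa [mul_comm]
end

section
/- Let F be a field, let d and r be positive integers, let V be an F-vector space, and let T_1, ..., T_r : V^d → F be multilinear functions. Suppose (v_1^0, v_1^1, ..., v_d^0, v_d^1) ∈ V^{2d} satisfies T_i(v_1^{ε_1}, ..., v_d^{ε_d}) = 1 for all i = 1, ..., r and all ε_1, ..., ε_d ∈ {0,1}. Suppose for each j = 1, ..., d that x_j and x'_j are distinct points in the affine hull of v_j^0 and v_j^1, i.e., x_j = α_j v_j^0 + (1-α_j) v_j^1 and x'_j = α'_j v_j^0 + (1-α'_j) v_j^1 with α_j ≠ α'_j (and v_j^0 ≠ v_j^1). Then T_i(x_1^{ε_1},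 ..., x_d^{ε_d}) = 1 for all i = 1, ..., r and all ε_1, ..., ε_d ∈ {0,1}, where x_j^0 := x_j and x_j^1 := x'_j. -/
/-!
Each argument is an affine combination of `v j false` and `v j true`, so its two weights sum to `1`.
Expanding `T i` by multilinearity gives the sum over all `δ : Fin d → Bool` of the products of
weights times `T i (v_1^{δ_1}, …, v_d^{δ_d}) = 1`; this sum factors as the product over `j` of the
sums of the weights, which is `1`.
-/

/-- If all `2^d` box equations `T_i(v_1^{ε_1}, …, v_d^{ε_d}) = 1` hold and, for each `j`,
`x_j` and `x'_j` are distinct points on the affine line through `v_j^0` and `v_j^1`,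
then all `2^d` box equations hold with `(x_j, x'_j)` in place of `(v_j^0, v_j^1)`. -/
theorem box_equations_on_affine_lines (F : Type*) [Field F] (d r : ℕ)
    (hd : 0 < d) (hr : 0 < r)
    (V : Type*) [AddCommGroup V] [Module F V]
    (T : Fin r → MultilinearMap F (fun _ : Fin d => V) F)
    (v : Fin d → Bool → V) (hv : ∀ j, v j false ≠ v j true)
    (hT : ∀ (i : Fin r) (ε : Fin d → Bool), T i (fun j => v j (ε j)) = 1)
    (α α' : Fin d → F) (hαα' : ∀ j, α j ≠ α' j)
    (x x' : Fin d → V)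
    (hx : ∀ j, x j = α j • v j false + (1 - α j) • v j true)
    (hx' : ∀ j, x' j = α' j • v j false + (1 - α' j) • v j true) :
    ∀ (i : Fin r) (ε : Fin d → Bool),
      T i (fun j => if ε j then x' j else x j) = 1 := by
  intro i ε
  -- Barycentric weights of the `j`-th argument with respect to `v j false`, `v j true`.
  let a : Fin d → F := fun j => if ε j then α' j else α j
  let c : Fin d → Bool → F := fun j b => if b then 1 - a j else a j
  have hpt : (fun j => if ε j then x' j else x j) = fun j => ∑ b, c j b • v j b := by
    funext j
    by_cases h : ε j = true <;> simp [c, a, h, hx, hx', add_comm]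
  have hc : ∀ j, ∑ b, c j b = 1 := fun j => by simp [c]
  rw [hpt, MultilinearMap.map_sum]
  simp only [MultilinearMap.map_smul_univ, hT, smul_eq_mul, mul_one]
  rw [← Fintype.prod_sum]
  simp only [hc, Finset.prod_const_one]
end
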